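/- arXiv:1312.1991 — 8 statements merged into one kernel-verified Lean document; each statement's English description precedes it below -/
import Mathlib

section
/- Let p > 1, let (a_n) be a sequence of nonnegative real numbers and (λ_n) a sequence of positive real numbers. Set A_n = λ_1 a_1 + ⋯ + λ_n a_n and Λ_n = λ_1 + ⋯ + λ_n. Then for every natural number N ≥ 1, Σ_{n=1}^N λ_n (A_n/Λ_n)^p + (1/(p−1)) Λ_N (A_N/Λ_N)^p ≤ (p/(p−1)) Σ_{n=1}^N λ_n a_n (A_n/Λ_n)^{p−1}. -/
/-!
Write `x n = A n / L n`. Since `lam n * a n = L n * x n - L (n - 1) * x (n - 1)`, the increment from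
`n - 1` to `n` of (right side) - (left side), multiplied by `p - 1`, equals
`L (n - 1) * (x (n - 1) ^ p + (p - 1) * x n ^ p - p * x (n - 1) * x n ^ (p - 1))`,
which is nonnegative by Young's inequality. Both sides vanish at `N = 0`, so the claim follows
by induction on `N`.
-/

/-- Young's inequality with exponents `p` and `p / (p - 1)`, applied to `x` and `y ^ (p - 1)`. -/
lemma mul_rpow_sub_one_le (p : ℝ) (hp : 1 < p) (x y : ℝ) (hx : 0 ≤ x) (hy : 0 ≤ y) :
    p * (x * y ^ (p - 1)) ≤ x ^ p + (p - 1) * y ^ p := by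
  have hp0 : 0 < p := by linarith
  have hp1 : p - 1 ≠ 0 := by linarith
  have h := Real.young_inequality_of_nonneg hx (Real.rpow_nonneg hy (p - 1))
    (Real.HolderConjugate.conjExponent hp)
  have hq : (p - 1) * Real.conjExponent p = p := by
    unfold Real.conjExponent
    field_simp
  rw [← Real.rpow_mul hy, hq] at h
  calc p * (x * y ^ (p - 1)) ≤ p * (x ^ p / p + y ^ p / Real.conjExponent p) := by gcongr
    _ = x ^ p + (p - 1) * y ^ p := by
      unfold Real.conjExponent
      field_simp

/-- Weighted discrete Hardy (Copson-type) inequality with exact remainder term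
(Theorem 2 of the paper). -/
theorem weighted_discrete_hardy (p : ℝ) (hp : 1 < p)
    (a lam : ℕ → ℝ) (ha : ∀ n, 0 ≤ a n) (hlam : ∀ n, 0 < lam n)
    (A L : ℕ → ℝ)
    (hA : ∀ n, A n = ∑ i ∈ Finset.Icc 1 n, lam i * a i)
    (hL : ∀ n, L n = ∑ i ∈ Finset.Icc 1 n, lam i)
    (N : ℕ) (hN : 1 ≤ N) :
    ∑ n ∈ Finset.Icc 1 N, lam n * (A n / L n) ^ p
      + (1 / (p - 1)) * L N * (A N / L N) ^ p
    ≤ (p / (p - 1)) * ∑ n ∈ Finset.Icc 1 N, lam n * a n * (A n / L n) ^ (p - 1) := by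
  have hp1 : 0 < p - 1 := by linarith
  have hL0 : ∀ n, 0 ≤ L n := fun n => by
    rw [hL]; exact Finset.sum_nonneg fun i _ => (hlam i).le
  have hA0 : ∀ n, 0 ≤ A n := fun n => by
    rw [hA]; exact Finset.sum_nonneg fun i _ => mul_nonneg (hlam i).le (ha i)
  have hLs : ∀ n, L (n + 1) = L n + lam (n + 1) := fun n => by
    rw [hL, hL, Finset.sum_Icc_succ_top (by omega)]
  have hAs : ∀ n, A (n + 1) = A n + lam (n + 1) * a (n + 1) := fun n => by
    rw [hA, hA, Finset.sum_Icc_succ_top (by omega)]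
  -- At `n = 0` the quotient is `0 / 0 = 0`, and the identity still holds because `A 0 = 0`.
  have hLx : ∀ n, L n * (A n / L n) = A n := fun n => by
    cases n with
    | zero => simp [hA]
    | succ n =>
      have h : L (n + 1) ≠ 0 := by
        have h1 := hL0 n
        have h2 := hlam (n + 1)
        rw [hLs]
        positivity
      field_simp
  have key : ∀ n : ℕ, (p - 1) * ∑ i ∈ Finset.Icc 1 n, lam i * (A i / L i) ^ p
      + L n * (A n / L n) ^ p
      ≤ p * ∑ i ∈ Finset.Icc 1 n, lam i * a i * (A i / L i) ^ (p - 1) := by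
    intro n
    induction n with
    | zero => simp [hL]
    | succ n ih =>
      rw [Finset.sum_Icc_succ_top (by omega), Finset.sum_Icc_succ_top (by omega)]
      have hx : 0 ≤ A n / L n := div_nonneg (hA0 n) (hL0 n)
      have hy : 0 ≤ A (n + 1) / L (n + 1) := div_nonneg (hA0 _) (hL0 _)
      have e1 := hLx n
      have e2 := hLx (n + 1)
      generalize A n / L n = x at *
      generalize A (n + 1) / L (n + 1) = y at *
      have hyoung := mul_le_mul_of_nonneg_left (mul_rpow_sub_one_le p hp x y hx hy) (hL0 n)
      have hpow : y ^ p = y * y ^ (p - 1) := by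
        rw [← Real.rpow_one_add' hy (by linarith)]
        congr 1
        ring
      have hla : lam (n + 1) * a (n + 1) = (L n + lam (n + 1)) * y - L n * x := by
        rw [← hLs, e1, e2, hAs]
        ring
      rw [hla, hLs]
      rw [hpow] at hyoung ⊢
      linarith
  calc _ = ((p - 1) * ∑ n ∈ Finset.Icc 1 N, lam n * (A n / L n) ^ p
        + L N * (A N / L N) ^ p) / (p - 1) := by field_simp
    _ ≤ (p * ∑ n ∈ Finset.Icc 1 N, lam n * a n * (A n / L n) ^ (p - 1)) / (p - 1) := by
      gcongr
      exact key N
    _ = _ := by ring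
end

section
/- Let p > 1, let (a_n) be a sequence of nonnegative real numbers and (λ_n) a sequence of positive real numbers. Set A_n = λ_1 a_1 + ⋯ + λ_n a_n and Λ_n = λ_1 + ⋯ + λ_n. Then for every n ≥ 2, λ_n (A_n/Λ_n)^p − (p/(p−1)) λ_n a_n (A_n/Λ_n)^{p−1} ≤ (1/(p−1)) Λ_{n−1} (A_{n−1}/Λ_{n−1})^p − (1/(p−1)) Λ_n (A_n/Λ_n)^p. -/
/-!
Write `x = A n / L n`, `y = A (n - 1) / L (n - 1)` and `M = L (n - 1)`. Since
`lam n * a n = L n * x - M * y`, multiplying the claim by `p - 1` and cancelling turns it into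
`M * (p * y * x ^ (p - 1)) ≤ M * (y ^ p + (p - 1) * x ^ p)`, which is `M` times Young's inequality
with exponents `p` and `p / (p - 1)` applied to `y` and `x ^ (p - 1)`.
-/

/-- Young's inequality for `y` and `x ^ (p - 1)`; equivalently, `t ↦ t ^ p` lies above its tangent
line at `x`. -/
lemma mul_mul_rpow_sub_one_le {p x y : ℝ} (hp : 1 < p) (hx : 0 ≤ x) (hy : 0 ≤ y) :
    p * y * x ^ (p - 1) ≤ y ^ p + (p - 1) * x ^ p := by
  have hp0 : 0 < p := by linarith
  have hp1 : 0 < p - 1 := by linarith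
  have h := Real.young_inequality_of_nonneg hy (Real.rpow_nonneg hx (p - 1))
    (Real.HolderConjugate.conjExponent hp)
  have hxp : (x ^ (p - 1)) ^ p.conjExponent = x ^ p := by
    rw [← Real.rpow_mul hx, Real.conjExponent, mul_div_cancel₀ _ hp1.ne']
  rw [hxp, Real.conjExponent] at h
  calc p * y * x ^ (p - 1) = p * (y * x ^ (p - 1)) := by ring
    _ ≤ p * (y ^ p / p + x ^ p / (p / (p - 1))) := by gcongr
    _ = y ^ p + (p - 1) * x ^ p := by field_simp

/-- The key telescoping estimate (inequality (2.3)) in the proof of the weighted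
discrete Hardy-type inequality. -/
theorem telescoping_estimate (p : ℝ) (hp : 1 < p)
    (a lam : ℕ → ℝ) (ha : ∀ n, 0 ≤ a n) (hlam : ∀ n, 0 < lam n)
    (A L : ℕ → ℝ)
    (hA : ∀ n, A n = ∑ i ∈ Finset.Icc 1 n, lam i * a i)
    (hL : ∀ n, L n = ∑ i ∈ Finset.Icc 1 n, lam i)
    (n : ℕ) (hn : 2 ≤ n) :
    lam n * (A n / L n) ^ p - (p / (p - 1)) * lam n * a n * (A n / L n) ^ (p - 1)
    ≤ (1 / (p - 1)) * L (n - 1) * (A (n - 1) / L (n - 1)) ^ p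
      - (1 / (p - 1)) * L n * (A n / L n) ^ p := by
  obtain ⟨m, rfl⟩ : ∃ m, n = m + 1 := ⟨n - 1, by omega⟩
  simp only [Nat.add_sub_cancel]
  have hp1 : 0 < p - 1 := by linarith
  have hA0 (k : ℕ) : 0 ≤ A k := by
    rw [hA]
    exact Finset.sum_nonneg fun i _ => mul_nonneg (hlam i).le (ha i)
  have hL0 (k : ℕ) (hk : 1 ≤ k) : 0 < L k := by
    rw [hL]
    exact Finset.sum_pos (fun i _ => hlam i) ⟨1, by simp [hk]⟩
  have hAs : A (m + 1) = A m + lam (m + 1) * a (m + 1) := by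
    rw [hA, hA, Finset.sum_Icc_succ_top (by omega)]
  have hLs : L (m + 1) = L m + lam (m + 1) := by
    rw [hL, hL, Finset.sum_Icc_succ_top (by omega)]
  have hM := hL0 m (by omega)
  have hN := hL0 (m + 1) (by omega)
  have hx0 : 0 ≤ A (m + 1) / L (m + 1) := div_nonneg (hA0 _) hN.le
  have hAx : A (m + 1) = L (m + 1) * (A (m + 1) / L (m + 1)) := by field_simp
  have hAy : A m = L m * (A m / L m) := by field_simp
  have hy0 : 0 ≤ A m / L m := div_nonneg (hA0 _) hM.le
  generalize A (m + 1) / L (m + 1) = x at *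
  generalize A m / L m = y at *
  have hla : lam (m + 1) * a (m + 1) = (L m + lam (m + 1)) * x - L m * y := by
    rw [← hLs, ← hAx, ← hAy, hAs]
    ring
  have hxp : x * x ^ (p - 1) = x ^ p := by
    rw [mul_comm, ← Real.rpow_add_one' hx0 (by linarith), sub_add_cancel]
  have hyoung := mul_le_mul_of_nonneg_left (mul_mul_rpow_sub_one_le hp hx0 hy0) hM.le
  -- The difference of the two sides is `1 / (p - 1)` times the slack in `hyoung`.
  have key : (1 / (p - 1)) * L m * y ^ p - (1 / (p - 1)) * L (m + 1) * x ^ p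
      - (lam (m + 1) * x ^ p - (p / (p - 1)) * lam (m + 1) * a (m + 1) * x ^ (p - 1))
      = (L m * (y ^ p + (p - 1) * x ^ p) - L m * (p * y * x ^ (p - 1))) / (p - 1) := by
    rw [hLs, mul_assoc (p / (p - 1)), hla]
    field_simp
    linear_combination p * (L m + lam (m + 1)) * hxp
  have := div_nonneg (sub_nonneg.2 hyoung) hp1.le
  linarith
end

section
/- Let g : (0,1] → [0,∞) be integrable, let p > 1, and set f = ∫₀¹ g(u) du. Then ∫₀¹ ((1/t)∫₀^t g(u) du)^p dt + (1/(p−1)) f^p ≤ (p/(p−1)) ∫₀¹ ((1/t)∫₀^t g(u) du)^{p−1} g(t) dt, where all integrals of nonnegative functions are taken with values in [0,∞]. -/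
/-!
With `Φ t = ∫₀ᵗ g`, the function `Φ ^ p` is absolutely continuous on `[0, 1]`, because `Φ` is and
`x ↦ x ^ p` is Lipschitz on bounded intervals; hence `Φ t ^ p = ∫₀ᵗ p Φ ^ (p - 1) g`
(`primitive_rpow`). Write `h = p Φ ^ (p - 1) g`. By Tonelli (`lintegral_mul_primitive`),
`∫₀¹ t ^ (-p) ∫₀ᵗ h(s) ds dt = ∫₀¹ h(s) ∫ₛ¹ t ^ (-p) dt ds`,
and since `∫ₛ¹ t ^ (-p) dt + 1 / (p - 1) = s ^ (1 - p) / (p - 1)` (`lintegral_kernel`), adding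
`(1 / (p - 1)) ∫₀¹ h = (1 / (p - 1)) f ^ p` turns the right-hand side into
`(1 / (p - 1)) ∫₀¹ s ^ (1 - p) h(s) ds`, which is the right-hand side of the claim. The two sides
are in fact equal, and as all the integrands are nonnegative this holds in `[0, ∞]`, with no
finiteness needed beyond that of `f`.
-/

open MeasureTheory Set
open scoped ENNReal NNReal

/-- The average `(1/t) ∫₀^t g(u) du` of a nonnegative function `g` over `(0, t]`,
taken with values in `[0, ∞]`. -/
noncomputable def hardyAvg (g : ℝ → ℝ≥0) (t : ℝ) : ℝ≥0∞ :=
  (ENNReal.ofReal t)⁻¹ * ∫⁻ u in Set.Ioc (0 : ℝ) t, (g u : ℝ≥0∞)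

/-- Post-composition with a Lipschitz function preserves absolute continuity. -/
lemma absolutelyContinuousOnInterval_lipschitz_comp {φ F : ℝ → ℝ} {a b : ℝ} {K : ℝ≥0} {S : Set ℝ}
    (hφ : LipschitzOnWith K φ S) (hF : AbsolutelyContinuousOnInterval F a b)
    (hS : ∀ x ∈ uIcc a b, F x ∈ S) :
    AbsolutelyContinuousOnInterval (fun x => φ (F x)) a b := by
  rw [absolutelyContinuousOnInterval_iff] at hF ⊢
  intro ε hε
  obtain ⟨δ, hδ, H⟩ := hF (ε / (K + 1)) (by positivity)
  refine ⟨δ, hδ, fun E hE hEδ => ?_⟩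
  have h1 := H E hE hEδ
  have h2 : ∑ i ∈ Finset.range E.1, dist (φ (F (E.2 i).1)) (φ (F (E.2 i).2))
      ≤ ∑ i ∈ Finset.range E.1, (K + 1) * dist (F (E.2 i).1) (F (E.2 i).2) := by
    refine Finset.sum_le_sum fun i hi => ?_
    have hm := hE.1 i hi
    refine (hφ.dist_le_mul _ (hS _ hm.1) _ (hS _ hm.2)).trans ?_
    gcongr
    linarith
  rw [← Finset.mul_sum] at h2
  refine h2.trans_lt ?_
  rwa [lt_div_iff₀' (by positivity)] at h1

/-- The chain rule `Φ t ^ p = ∫₀ᵗ p Φ ^ (p - 1) g` for the primitive `Φ t = ∫₀ᵗ g`. -/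
lemma primitive_rpow {p : ℝ} (hp : 1 < p) {g : ℝ → ℝ≥0} (hg : Measurable g)
    (hint : (∫⁻ u in Ioc (0 : ℝ) 1, (g u : ℝ≥0∞)) ≠ ⊤) {t : ℝ} (ht : t ∈ Ioc (0 : ℝ) 1) :
    (∫⁻ u in Ioc 0 t, (g u : ℝ≥0∞)) ^ p
      = ∫⁻ s in Ioc 0 t, ENNReal.ofReal p * (∫⁻ u in Ioc 0 s, (g u : ℝ≥0∞)) ^ (p - 1) * g s := by
  have hgi : IntegrableOn (fun u => (g u : ℝ)) (Ioc 0 1) := by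
    refine ⟨(measurable_coe_nnreal_real.comp hg).aestronglyMeasurable, ?_⟩
    rw [hasFiniteIntegral_iff_enorm]
    simpa [Real.enorm_eq_ofReal] using hint.lt_top
  have hI : IntervalIntegrable (fun u => (g u : ℝ)) volume 0 t := by
    rw [intervalIntegrable_iff_integrableOn_Ioc_of_le ht.1.le]
    exact hgi.mono_set (Ioc_subset_Ioc_right ht.2)
  set F : ℝ → ℝ := fun x => ∫ u in (0 : ℝ)..x, (g u : ℝ) with hF
  have hF0 : ∀ x, 0 ≤ x → 0 ≤ F x := fun x hx =>
    intervalIntegral.integral_nonneg hx fun u _ => (g u).2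
  have hΦ : ∀ s ∈ Icc 0 t, ∫⁻ u in Ioc 0 s, (g u : ℝ≥0∞) = ENNReal.ofReal (F s) := by
    intro s hs
    rw [hF]
    simp only
    rw [intervalIntegral.integral_of_le hs.1, ofReal_integral_eq_lintegral_ofReal
      (hgi.mono_set (Ioc_subset_Ioc_right (hs.2.trans ht.2)))
      (Filter.Eventually.of_forall fun u => (g u).2)]
    simp
  have hFac : AbsolutelyContinuousOnInterval F 0 t :=
    hI.absolutelyContinuousOnInterval_intervalIntegral (by simp)
  obtain ⟨C, hC⟩ := hFac.exists_bound
  have hcd : ContDiff ℝ 1 (fun x : ℝ => x ^ p) :=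
    Real.contDiff_rpow_const_of_le (by exact_mod_cast hp.le)
  obtain ⟨K, hK⟩ := hcd.contDiffOn.exists_lipschitzOnWith one_ne_zero (convex_Icc (-C) C)
    isCompact_Icc
  have hac : AbsolutelyContinuousOnInterval (fun x => F x ^ p) 0 t :=
    absolutelyContinuousOnInterval_lipschitz_comp (φ := fun x => x ^ p) (F := F) hK hFac
      fun x hx => abs_le.mp (hC x hx)
  have hder : ∀ᵐ x, x ∈ uIcc 0 t → deriv (fun x => F x ^ p) x = p * F x ^ (p - 1) * g x := by
    filter_upwards [hI.ae_hasDerivAt_integral] with x hx hxt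
    have := (hx hxt 0 (by simp)).rpow_const (p := p) (Or.inr hp.le)
    rw [this.deriv]
    ring
  have hder' : ∀ᵐ x ∂volume.restrict (Ioc 0 t),
      deriv (fun x => F x ^ p) x = p * F x ^ (p - 1) * g x := by
    rw [ae_restrict_iff' measurableSet_Ioc]
    filter_upwards [hder] with x hx hxt
    exact hx (by rw [uIcc_of_le ht.1.le]; exact Ioc_subset_Icc_self hxt)
  have hdi : IntegrableOn (deriv (fun x => F x ^ p)) (Ioc 0 t) :=
    (intervalIntegrable_iff_integrableOn_Ioc_of_le ht.1.le).mp hac.intervalIntegrable_deriv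
  have hnn : ∀ x ∈ Ioc 0 t, 0 ≤ p * F x ^ (p - 1) := fun x hx =>
    mul_nonneg (by linarith) (Real.rpow_nonneg (hF0 x hx.1.le) _)
  have hftc := hac.integral_deriv_eq_sub
  have hF00 : F 0 = 0 := by simp [hF]
  rw [hF00, Real.zero_rpow (by linarith), sub_zero, intervalIntegral.integral_of_le ht.1.le] at hftc
  rw [hΦ t ⟨ht.1.le, le_rfl⟩, ENNReal.ofReal_rpow_of_nonneg (hF0 t ht.1.le) (by linarith), ← hftc,
    ofReal_integral_eq_lintegral_ofReal hdi]
  · refine lintegral_congr_ae ?_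
    filter_upwards [hder', ae_restrict_mem measurableSet_Ioc] with x hx hxt
    rw [hx, hΦ x (Ioc_subset_Icc_self hxt), ENNReal.ofReal_mul (hnn x hxt),
      ENNReal.ofReal_mul (by linarith), ENNReal.ofReal_rpow_of_nonneg (hF0 x hxt.1.le)
      (by linarith), ENNReal.ofReal_coe_nnreal]
  · filter_upwards [hder', ae_restrict_mem measurableSet_Ioc] with x hx hxt
    rw [hx]
    exact mul_nonneg (hnn x hxt) (g x).2

lemma lintegral_kernel {p : ℝ} (hp : 1 < p) {s : ℝ} (hs : s ∈ Ioc (0 : ℝ) 1) :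
    (∫⁻ t in Icc s 1, ENNReal.ofReal (t ^ (-p))) + ENNReal.ofReal (1 / (p - 1))
      = ENNReal.ofReal (s ^ (1 - p) / (p - 1)) := by
  have h0 : (0 : ℝ) ∉ uIcc s 1 := by
    rw [uIcc_of_le hs.2]; exact fun h => absurd h.1 (not_le.mpr hs.1)
  have hi : IntervalIntegrable (fun t : ℝ => t ^ (-p)) volume s 1 :=
    intervalIntegral.intervalIntegrable_rpow (Or.inr h0)
  have hnn : ∀ᵐ t ∂volume.restrict (Ioc s 1), 0 ≤ t ^ (-p) := by
    filter_upwards [ae_restrict_mem measurableSet_Ioc] with t ht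
    exact Real.rpow_nonneg (hs.1.le.trans ht.1.le) _
  have hval : ∫ t in s..1, t ^ (-p) = s ^ (1 - p) / (p - 1) - 1 / (p - 1) := by
    rw [integral_rpow (Or.inr ⟨by linarith, h0⟩), Real.one_rpow, neg_add_eq_sub]
    have : p - 1 ≠ 0 := by linarith
    have : 1 - p ≠ 0 := by linarith
    field_simp
    ring
  have hpos : 0 ≤ ∫ t in s..1, t ^ (-p) := by
    rw [intervalIntegral.integral_of_le hs.2]
    exact integral_nonneg_of_ae hnn
  have h1 : (0 : ℝ) ≤ 1 / (p - 1) := one_div_nonneg.mpr (by linarith)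
  rw [setLIntegral_congr Ioc_ae_eq_Icc.symm, ← ofReal_integral_eq_lintegral_ofReal
    ((intervalIntegrable_iff_integrableOn_Ioc_of_le hs.2).mp hi) hnn,
    ← intervalIntegral.integral_of_le hs.2, ← ENNReal.ofReal_add hpos h1, hval, sub_add_cancel]

/-- Tonelli's theorem on the triangle `0 < s ≤ t ≤ 1`. -/
lemma lintegral_mul_primitive {w h : ℝ → ℝ≥0∞} (hw : Measurable w) (hh : Measurable h) :
    ∫⁻ t in Ioc (0 : ℝ) 1, w t * ∫⁻ s in Ioc 0 t, h s
      = ∫⁻ s in Ioc (0 : ℝ) 1, h s * ∫⁻ t in Icc s 1, w t := by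
  have hm : Measurable (Function.uncurry fun t s : ℝ => if s ≤ t then w t * h s else 0) :=
    Measurable.ite (measurableSet_le measurable_snd measurable_fst)
      ((hw.comp measurable_fst).mul (hh.comp measurable_snd)) measurable_const
  calc _ = ∫⁻ t in Ioc (0 : ℝ) 1, ∫⁻ s in Ioc (0 : ℝ) 1, if s ≤ t then w t * h s else 0 := by
        refine setLIntegral_congr_fun measurableSet_Ioc fun t ht => ?_
        rw [← lintegral_const_mul _ hh, ← lintegral_indicator measurableSet_Ioc,
          ← lintegral_indicator measurableSet_Ioc]
        refine lintegral_congr fun s => ?_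
        simp only [indicator, mem_Ioc]
        have := ht.2
        split_ifs <;> grind
    _ = ∫⁻ s in Ioc (0 : ℝ) 1, ∫⁻ t in Ioc (0 : ℝ) 1, if s ≤ t then w t * h s else 0 :=
        lintegral_lintegral_swap hm.aemeasurable
    _ = _ := by
        refine setLIntegral_congr_fun measurableSet_Ioc fun s hs => ?_
        rw [← lintegral_const_mul _ hw, ← lintegral_indicator measurableSet_Ioc,
          ← lintegral_indicator measurableSet_Icc]
        refine lintegral_congr fun t => ?_
        simp only [indicator, mem_Ioc, mem_Icc]
        have := hs.1
        split_ifs <;> grind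

/-- Corollary 1: the Hardy inequality on `(0,1]` with exact remainder term. -/
theorem hardy_with_remainder (p : ℝ) (hp : 1 < p)
    (g : ℝ → ℝ≥0) (hg : Measurable g)
    (hint : (∫⁻ u in Set.Ioc (0 : ℝ) 1, (g u : ℝ≥0∞)) ≠ ⊤)
    (f : ℝ≥0∞) (hf : f = ∫⁻ u in Set.Ioc (0 : ℝ) 1, (g u : ℝ≥0∞)) :
    (∫⁻ t in Set.Ioc (0 : ℝ) 1, hardyAvg g t ^ p)
      + ENNReal.ofReal (1 / (p - 1)) * f ^ p
    ≤ ENNReal.ofReal (p / (p - 1))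
        * ∫⁻ t in Set.Ioc (0 : ℝ) 1, hardyAvg g t ^ (p - 1) * (g t : ℝ≥0∞) := by
  have hp1 : 0 < p - 1 := by linarith
  set Φ : ℝ → ℝ≥0∞ := fun t => ∫⁻ u in Ioc 0 t, (g u : ℝ≥0∞) with hΦ
  have hΦm : Measurable Φ :=
    Monotone.measurable fun a b hab => lintegral_mono_set (Ioc_subset_Ioc_right hab)
  set h : ℝ → ℝ≥0∞ := fun s => ENNReal.ofReal p * Φ s ^ (p - 1) * g s with hh
  have hhm : Measurable h :=
    ((hΦm.pow_const _).const_mul _).mul (measurable_coe_nnreal_ennreal.comp hg)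
  have hwm : Measurable fun t : ℝ => ENNReal.ofReal (t ^ (-p)) :=
    (measurable_id.pow_const (-p)).ennreal_ofReal
  have hrpow : ∀ t ∈ Ioc (0 : ℝ) 1, ∀ q : ℝ, 0 ≤ q →
      hardyAvg g t ^ q = ENNReal.ofReal (t ^ (-q)) * Φ t ^ q := by
    intro t ht q hq
    rw [hardyAvg, ENNReal.mul_rpow_of_nonneg _ _ hq, ← ENNReal.ofReal_inv_of_pos ht.1,
      ENNReal.ofReal_rpow_of_pos (inv_pos.mpr ht.1), Real.inv_rpow ht.1.le, Real.rpow_neg ht.1.le]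
  refine le_of_eq ?_
  calc _ = (∫⁻ t in Ioc (0 : ℝ) 1, ENNReal.ofReal (t ^ (-p)) * ∫⁻ s in Ioc 0 t, h s)
          + ENNReal.ofReal (1 / (p - 1)) * ∫⁻ s in Ioc 0 1, h s := by
        rw [hf, primitive_rpow hp hg hint ⟨one_pos, le_rfl⟩]
        congr 1
        refine setLIntegral_congr_fun measurableSet_Ioc fun t ht => ?_
        rw [hrpow t ht p (by linarith), hΦ, primitive_rpow hp hg hint ht]
    _ = ∫⁻ s in Ioc (0 : ℝ) 1, (h s * (∫⁻ t in Icc s 1, ENNReal.ofReal (t ^ (-p)))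
          + ENNReal.ofReal (1 / (p - 1)) * h s) := by
        rw [lintegral_mul_primitive hwm hhm, lintegral_add_right _ (hhm.const_mul _),
          lintegral_const_mul _ hhm]
    _ = ∫⁻ s in Ioc (0 : ℝ) 1, ENNReal.ofReal (p / (p - 1))
          * (hardyAvg g s ^ (p - 1) * (g s : ℝ≥0∞)) := by
        refine setLIntegral_congr_fun measurableSet_Ioc fun s hs => ?_
        rw [mul_comm (ENNReal.ofReal (1 / (p - 1))), ← mul_add, lintegral_kernel hp hs,
          hrpow s hs (p - 1) hp1.le, neg_sub, hh, div_eq_mul_inv, div_eq_mul_inv,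
          ENNReal.ofReal_mul (Real.rpow_nonneg hs.1.le _), ENNReal.ofReal_mul (by linarith)]
        ring
    _ = _ := lintegral_const_mul' _ _ ENNReal.ofReal_ne_top
end

section
/- Let g : (0,1] → [0,∞) be integrable, let p > 1 and 1 ≤ q ≤ p, and set f = ∫₀¹ g(u) du. Then ∫₀¹ ((1/t)∫₀^t g(u) du)^p dt + (q/(p−1)) f^p ≤ (p/(p−1))^q ∫₀¹ ((1/t)∫₀^t g(u) du)^{p−q} g(t)^q dt, where all integrals of nonnegative functions are taken with values in [0,∞]. -/
/-!
Let `F t = ∫₀ᵗ g` and `A t = F t / t` (`hardyAvg g t`), and put `c = p / (p - 1)`,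
`f = F 1`.

For `q = 1` and bounded `g` the claim is an equality (`hardy_identity`):
`∫₀¹ A ^ p + f ^ p / (p - 1) = c ∫₀¹ A ^ (p - 1) g`. Indeed `F ^ p` is absolutely continuous with
derivative `p F ^ (p - 1) g` almost everywhere (`rpow_lintegral_eq`); integrating against `t ^ (-p)`
and exchanging the integrals replaces `t ^ (-p)` by `(u ^ (1 - p) - 1) / (p - 1)`, and the `- 1`
accounts for the term in `f ^ p`.

For `1 ≤ q ≤ p`, Bernoulli's inequality gives pointwise
`q c A ^ (p - 1) g ≤ (q - 1) A ^ p + c ^ q A ^ (p - q) g ^ q` (`bernoulli_ennreal`). Integrating,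
using the identity on the left, and cancelling `(q - 1) ∫₀¹ A ^ p`, which is finite for bounded `g`,
proves the claim for bounded `g` (`hardy_bounded`).

For general `g`, apply this to the truncations `min g n`. Both terms on the left converge by
monotone convergence, and the right-hand side only increases when `min g n` is replaced by `g`,
because `p - q` and `q` are nonnegative. The truncation matters because `∫₀¹ A ^ p` may be infinite,
in which case nothing can be cancelled.
-/

open MeasureTheory Set
open scoped ENNReal NNReal

lemma lintegral_eq_ofReal_primitive (g : ℝ → ℝ≥0) (hg : Measurable g) (M : ℝ≥0)
    (hM : ∀ x, g x ≤ M) {t : ℝ} (ht : 0 ≤ t) :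
    (∫⁻ u in Ioc (0 : ℝ) t, (g u : ℝ≥0∞)) = ENNReal.ofReal (∫ u in (0 : ℝ)..t, (g u : ℝ)) := by
  have hi : IntegrableOn (fun u => (g u : ℝ)) (Ioc 0 t) := by
    refine Measure.integrableOn_of_bounded (M := M) (by simp) (by fun_prop) ?_
    exact .of_forall fun x => by simpa using hM x
  rw [intervalIntegral.integral_of_le ht, ofReal_integral_eq_lintegral_ofReal hi
    (.of_forall fun x => (g x).2)]
  simp

/-- The fundamental theorem of calculus for the `p`-th power of the primitive of a bounded
function: this power is Lipschitz, hence absolutely continuous. -/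
lemma rpow_lintegral_eq (p : ℝ) (hp : 1 < p) (g : ℝ → ℝ≥0) (hg : Measurable g) (M : ℝ≥0)
    (hM : ∀ x, g x ≤ M) {t : ℝ} (ht : 0 ≤ t) :
    (∫⁻ u in Ioc (0 : ℝ) t, (g u : ℝ≥0∞)) ^ p =
      ∫⁻ u in Ioc (0 : ℝ) t,
        ENNReal.ofReal p * (∫⁻ v in Ioc (0 : ℝ) u, (g v : ℝ≥0∞)) ^ (p - 1) * g u := by
  set G : ℝ → ℝ := fun x => ∫ u in (0 : ℝ)..x, (g u : ℝ) with hG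
  have hii : ∀ a b, IntervalIntegrable (fun u => (g u : ℝ)) volume a b := fun a b => by
    rw [intervalIntegrable_iff]
    refine Measure.integrableOn_of_bounded (M := M) (by simp) (by fun_prop) ?_
    exact .of_forall fun x => by simpa using hM x
  have hG0 : ∀ x, 0 ≤ x → 0 ≤ G x := fun x hx =>
    intervalIntegral.integral_nonneg hx fun u _ => (g u).2
  have hLip : LipschitzWith M G := by
    refine LipschitzWith.of_dist_le_mul fun x y => ?_
    rw [Real.dist_eq, Real.dist_eq, hG]
    simp only
    rw [intervalIntegral.integral_interval_sub_left (hii _ _) (hii _ _)]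
    have h := intervalIntegral.norm_integral_le_of_norm_le_const (a := y) (b := x) (C := M)
      (f := fun u => (g u : ℝ)) fun u _ => by simpa using hM u
    simpa using h
  have hGle : ∀ x ∈ Icc 0 t, G x ∈ Icc 0 (M * t) := fun x hx => by
    refine ⟨hG0 x hx.1, ?_⟩
    have h := hLip.dist_le_mul x 0
    have h0 : G 0 = 0 := by simp [hG]
    rw [h0, Real.dist_eq, Real.dist_eq, sub_zero, sub_zero, abs_of_nonneg hx.1] at h
    exact (le_abs_self _).trans (h.trans (by gcongr; exact hx.2))
  -- `x ^ p` is Lipschitz on the range of `G`, since `p ≥ 1` bounds its derivative there.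
  have hpow : LipschitzOnWith (p * (M * t) ^ (p - 1)).toNNReal (fun x : ℝ => x ^ p)
      (Icc 0 (M * t)) := by
    refine Convex.lipschitzOnWith_of_nnnorm_hasDerivWithin_le (convex_Icc _ _)
      (fun x _ => (Real.hasDerivAt_rpow_const (Or.inr hp.le)).hasDerivWithinAt) ?_
    intro x hx
    rw [← NNReal.coe_le_coe, coe_nnnorm, Real.norm_of_nonneg
      (mul_nonneg (by linarith) (Real.rpow_nonneg hx.1 _))]
    refine le_trans ?_ (Real.le_coe_toNNReal _)
    have h := Real.rpow_le_rpow hx.1 hx.2 (by linarith : 0 ≤ p - 1)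
    gcongr
  have hac : AbsolutelyContinuousOnInterval (fun x => G x ^ p) 0 t := by
    refine LipschitzOnWith.absolutelyContinuousOnInterval
      (K := (p * (M * t) ^ (p - 1)).toNNReal * M) ?_
    rw [uIcc_of_le ht]
    exact hpow.comp hLip.lipschitzOnWith hGle
  have hderiv : ∀ᵐ x, x ∈ Ioc 0 t →
      deriv (fun x => G x ^ p) x = p * G x ^ (p - 1) * g x := by
    filter_upwards [(hii 0 t).ae_hasDerivAt_integral] with x hx hxt
    rw [uIcc_of_le ht] at hx
    have h := (hx (Ioc_subset_Icc_self hxt) 0 (left_mem_Icc.2 ht)).rpow_const (p := p)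
      (Or.inr hp.le)
    rw [h.deriv]
    ring
  have hFTC := hac.integral_deriv_eq_sub
  have hint := hac.intervalIntegrable_deriv
  have hG00 : G 0 ^ p = 0 := by
    simp [hG, Real.zero_rpow (by linarith : p ≠ 0)]
  rw [hG00, sub_zero, intervalIntegral.integral_of_le ht] at hFTC
  rw [intervalIntegrable_iff, uIoc_of_le ht] at hint
  have hderiv' := (ae_restrict_iff' (μ := volume) measurableSet_Ioc).2 hderiv
  rw [lintegral_eq_ofReal_primitive g hg M hM ht,
    ENNReal.ofReal_rpow_of_nonneg (hG0 t ht) (by linarith)]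
  change ENNReal.ofReal (G t ^ p) = _
  rw [← hFTC,
    ofReal_integral_eq_lintegral_ofReal hint]
  · refine lintegral_congr_ae ?_
    filter_upwards [hderiv', ae_restrict_mem measurableSet_Ioc] with x hx hxt
    have hx0 := hG0 x hxt.1.le
    rw [hx, lintegral_eq_ofReal_primitive g hg M hM hxt.1.le,
      ENNReal.ofReal_rpow_of_nonneg hx0 (by linarith),
      ENNReal.ofReal_mul (by positivity), ENNReal.ofReal_mul (by linarith),
      ENNReal.ofReal_coe_nnreal]
  · filter_upwards [hderiv', ae_restrict_mem measurableSet_Ioc] with x hx hxt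
    have hx0 := hG0 x hxt.1.le
    rw [hx]
    simp only [Pi.zero_apply]
    positivity

lemma measurable_lintegral_Ioc (g : ℝ → ℝ≥0) :
    Measurable fun t : ℝ => ∫⁻ u in Ioc (0 : ℝ) t, (g u : ℝ≥0∞) :=
  Monotone.measurable fun _ _ h => lintegral_mono_set (Ioc_subset_Ioc_right h)

lemma measurable_hardyAvg (g : ℝ → ℝ≥0) : Measurable (hardyAvg g) := by
  unfold hardyAvg
  exact (ENNReal.measurable_ofReal.inv).mul (measurable_lintegral_Ioc g)

lemma hardyAvg_rpow {r : ℝ} (hr : 0 ≤ r) (g : ℝ → ℝ≥0) {t : ℝ} (ht : 0 < t) :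
    hardyAvg g t ^ r =
      ENNReal.ofReal (t ^ (-r)) * (∫⁻ u in Ioc (0 : ℝ) t, (g u : ℝ≥0∞)) ^ r := by
  rw [hardyAvg, ENNReal.mul_rpow_of_nonneg _ _ hr, ENNReal.inv_rpow, ← ENNReal.rpow_neg,
    ENNReal.ofReal_rpow_of_pos ht]

lemma lintegral_rpow_neg (p : ℝ) (hp : 1 < p) {u : ℝ} (hu : u ∈ Ioc (0 : ℝ) 1) :
    (∫⁻ t in Icc u 1, ENNReal.ofReal (t ^ (-p))) =
      ENNReal.ofReal ((u ^ (1 - p) - 1) / (p - 1)) := by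
  have h0 : (0 : ℝ) ∉ uIcc u 1 := by
    rw [uIcc_of_le hu.2]; exact fun h => absurd h.1 (not_le.2 hu.1)
  have hi := intervalIntegral.intervalIntegrable_rpow (μ := volume) (r := -p) (Or.inr h0)
  have h := integral_rpow (a := u) (b := 1) (r := -p) (Or.inr ⟨by linarith, h0⟩)
  rw [intervalIntegrable_iff, uIoc_of_le hu.2] at hi
  rw [intervalIntegral.integral_of_le hu.2] at h
  rw [setLIntegral_congr Ioc_ae_eq_Icc.symm, ← ofReal_integral_eq_lintegral_ofReal hi, h]
  · congr 1
    have : p - 1 ≠ 0 := by linarith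
    have : -p + 1 ≠ 0 := by linarith
    rw [Real.one_rpow, show -p + 1 = -(p - 1) by ring, show 1 - p = -(p - 1) by ring]
    field_simp
    ring
  · filter_upwards [ae_restrict_mem measurableSet_Ioc] with t ht
    exact Real.rpow_nonneg (hu.1.le.trans ht.1.le) _

/-- The case `q = 1`, which is an identity. Writing `F` for the primitive of `g`, it is Tonelli's
theorem applied to `F t ^ p = ∫₀ᵗ p F ^ (p - 1) g` integrated against `t ^ (-p)`, so that no
boundary term at `0` appears. -/
lemma hardy_identity (p : ℝ) (hp : 1 < p) (g : ℝ → ℝ≥0) (hg : Measurable g) (M : ℝ≥0)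
    (hM : ∀ x, g x ≤ M) :
    (∫⁻ t in Ioc (0 : ℝ) 1, hardyAvg g t ^ p)
      + ENNReal.ofReal (1 / (p - 1)) * (∫⁻ u in Ioc (0 : ℝ) 1, (g u : ℝ≥0∞)) ^ p
    = ENNReal.ofReal (p / (p - 1))
        * ∫⁻ t in Ioc (0 : ℝ) 1, hardyAvg g t ^ (p - 1) * (g t : ℝ≥0∞) := by
  set h : ℝ → ℝ≥0∞ := fun u =>
    ENNReal.ofReal p * (∫⁻ v in Ioc (0 : ℝ) u, (g v : ℝ≥0∞)) ^ (p - 1) * g u with hh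
  have hmeas : Measurable h :=
    (((measurable_lintegral_Ioc g).pow_const _).const_mul _).mul (by fun_prop)
  have hp1 : 0 < p - 1 := by linarith
  -- Expand `F t ^ p` as an integral over `u ≤ t`, exchange, and integrate `t ^ (-p)` over `[u, 1]`.
  have key : (∫⁻ t in Ioc (0 : ℝ) 1, hardyAvg g t ^ p) =
      ∫⁻ u in Ioc (0 : ℝ) 1, ENNReal.ofReal ((u ^ (1 - p) - 1) / (p - 1)) * h u := by
    calc (∫⁻ t in Ioc (0 : ℝ) 1, hardyAvg g t ^ p)
        = ∫⁻ t in Ioc (0 : ℝ) 1, ∫⁻ u in Ioc (0 : ℝ) 1,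
            {z : ℝ × ℝ | z.2 ≤ z.1}.indicator
              (fun z => ENNReal.ofReal (z.1 ^ (-p)) * h z.2) (t, u) := by
          refine setLIntegral_congr_fun measurableSet_Ioc fun t ht => ?_
          rw [hardyAvg_rpow (by linarith) g ht.1, rpow_lintegral_eq p hp g hg M hM ht.1.le,
            ← lintegral_const_mul _ hmeas]
          have : Ioc (0 : ℝ) t = Iic t ∩ Ioc 0 1 := by
            ext x; simp only [mem_Ioc, mem_inter_iff, mem_Iic]
            exact ⟨fun hx => ⟨hx.2, hx.1, hx.2.trans ht.2⟩, fun hx => ⟨hx.2.1, hx.1⟩⟩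
          rw [this, ← setLIntegral_indicator measurableSet_Iic]
          rfl
      _ = ∫⁻ u in Ioc (0 : ℝ) 1, ∫⁻ t in Ioc (0 : ℝ) 1,
            {z : ℝ × ℝ | z.2 ≤ z.1}.indicator
              (fun z => ENNReal.ofReal (z.1 ^ (-p)) * h z.2) (t, u) := by
          refine lintegral_lintegral_swap (Measurable.aemeasurable ?_)
          refine Measurable.indicator ?_ (measurableSet_le measurable_snd measurable_fst)
          exact (ENNReal.measurable_ofReal.comp (measurable_fst.pow_const _)).mul
            (hmeas.comp measurable_snd)
      _ = _ := by
          refine setLIntegral_congr_fun measurableSet_Ioc fun u hu => ?_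
          rw [← lintegral_rpow_neg p hp hu, ← lintegral_mul_const _ (by fun_prop)]
          have : Icc u 1 = Ici u ∩ Ioc 0 1 := by
            ext x; simp only [mem_Icc, mem_Ioc, mem_inter_iff, mem_Ici]
            exact ⟨fun hx => ⟨hx.1, hu.1.trans_le hx.1, hx.2⟩, fun hx => ⟨hx.1, hx.2.2⟩⟩
          rw [this, ← setLIntegral_indicator measurableSet_Ici]
          rfl
  rw [key, rpow_lintegral_eq p hp g hg M hM zero_le_one, ← lintegral_const_mul _ hmeas,
    ← lintegral_add_right _ (hmeas.const_mul _), ← lintegral_const_mul]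
  · refine setLIntegral_congr_fun measurableSet_Ioc fun u hu => ?_
    have hu1 : 1 ≤ u ^ (1 - p) := Real.one_le_rpow_of_pos_of_le_one_of_nonpos hu.1 hu.2 (by linarith)
    rw [← add_mul, ← ENNReal.ofReal_add (div_nonneg (by linarith) hp1.le) (by positivity),
      hardyAvg_rpow hp1.le g hu.1, hh, neg_sub]
    simp only [← mul_assoc]
    rw [← ENNReal.ofReal_mul (div_nonneg (by linarith) hp1.le), ← ENNReal.ofReal_mul (by positivity)]
    congr 3
    field_simp
    ring
  · exact ((measurable_hardyAvg g).pow_const _).mul (by fun_prop)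

/-- The pointwise inequality giving general `q`: Bernoulli's inequality `1 + q (y - 1) ≤ y ^ q` at
`y = c x / a`, multiplied by `a ^ p`. -/
lemma bernoulli_real (p q c a x : ℝ) (hp : 1 < p) (hq1 : 1 ≤ q) (hc : 0 ≤ c)
    (ha : 0 ≤ a) (hx : 0 ≤ x) :
    q * (c * (a ^ (p - 1) * x)) ≤ (q - 1) * a ^ p + c ^ q * (a ^ (p - q) * x ^ q) := by
  rcases ha.eq_or_lt with rfl | ha
  · rw [Real.zero_rpow (by linarith : p - 1 ≠ 0), Real.zero_rpow (by linarith : p ≠ 0)]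
    simp only [zero_mul, mul_zero, zero_add]
    positivity
  · have hy : 0 ≤ c * x / a := by positivity
    have h := one_add_mul_self_le_rpow_one_add (s := c * x / a - 1) (by linarith) hq1
    rw [add_sub_cancel, Real.div_rpow (by positivity) ha.le, Real.mul_rpow hc hx] at h
    have h2 := mul_le_mul_of_nonneg_left h (Real.rpow_nonneg ha.le p)
    rw [Real.rpow_sub ha, Real.rpow_sub ha, Real.rpow_one]
    have e : a ^ p * (1 + q * (c * x / a - 1)) = q * (c * (a ^ p / a * x)) - (q - 1) * a ^ p := by
      ring
    have e2 : a ^ p * (c ^ q * x ^ q / a ^ q) = c ^ q * (a ^ p / a ^ q * x ^ q) := by ring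
    linarith

lemma bernoulli_ennreal (p q c : ℝ) (hp : 1 < p) (hq1 : 1 ≤ q) (hqp : q ≤ p) (hc : 0 ≤ c)
    (a : ℝ≥0∞) (ha : a ≠ ⊤) (x : ℝ≥0) :
    ENNReal.ofReal q * (ENNReal.ofReal c * (a ^ (p - 1) * x)) ≤
      ENNReal.ofReal (q - 1) * a ^ p + ENNReal.ofReal c ^ q * (a ^ (p - q) * (x : ℝ≥0∞) ^ q) := by
  have h := ENNReal.ofReal_le_ofReal
    (bernoulli_real p q c a.toReal x hp hq1 hc ENNReal.toReal_nonneg x.2)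
  have ht : 0 ≤ a.toReal := ENNReal.toReal_nonneg
  have hq0 : 0 ≤ q - 1 := by linarith
  rw [ENNReal.ofReal_add (by positivity) (by positivity),
    ENNReal.ofReal_mul (by linarith), ENNReal.ofReal_mul hc, ENNReal.ofReal_mul (by positivity),
    ENNReal.ofReal_mul hq0, ENNReal.ofReal_mul (by positivity), ENNReal.ofReal_mul (by positivity),
    ← ENNReal.ofReal_rpow_of_nonneg ht (by linarith),
    ← ENNReal.ofReal_rpow_of_nonneg ht (by linarith),
    ← ENNReal.ofReal_rpow_of_nonneg ht (by linarith),
    ← ENNReal.ofReal_rpow_of_nonneg hc (by linarith),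
    ← ENNReal.ofReal_rpow_of_nonneg x.coe_nonneg (by linarith),
    ENNReal.ofReal_toReal ha] at h
  simpa [ENNReal.ofReal_coe_nnreal] using h

lemma hardyAvg_le_of_bounded (g : ℝ → ℝ≥0) (M : ℝ≥0) (hM : ∀ x, g x ≤ M) (t : ℝ) :
    hardyAvg g t ≤ M := by
  have h : (∫⁻ u in Ioc (0 : ℝ) t, (g u : ℝ≥0∞)) ≤ M * ENNReal.ofReal t := by
    refine (lintegral_mono fun u => ENNReal.coe_le_coe.2 (hM u)).trans ?_
    simp
  rw [hardyAvg, mul_comm, ← ENNReal.div_eq_inv_mul.trans (mul_comm _ _)]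
  exact ENNReal.div_le_of_le_mul h

/-- The inequality for bounded `g`. Boundedness makes `∫₀¹ (hardyAvg g) ^ p` finite, which permits
cancelling `q - 1` copies of it. -/
lemma hardy_bounded (p q : ℝ) (hp : 1 < p) (hq1 : 1 ≤ q) (hqp : q ≤ p)
    (g : ℝ → ℝ≥0) (hg : Measurable g) (M : ℝ≥0) (hM : ∀ x, g x ≤ M) :
    (∫⁻ t in Ioc (0 : ℝ) 1, hardyAvg g t ^ p)
      + ENNReal.ofReal (q / (p - 1)) * (∫⁻ u in Ioc (0 : ℝ) 1, (g u : ℝ≥0∞)) ^ p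
    ≤ ENNReal.ofReal (p / (p - 1)) ^ q
        * ∫⁻ t in Ioc (0 : ℝ) 1, hardyAvg g t ^ (p - q) * (g t : ℝ≥0∞) ^ q := by
  have hA := measurable_hardyAvg g
  have hp1 : 0 < p - 1 := by linarith
  have hc : 0 ≤ p / (p - 1) := div_nonneg (by linarith) hp1.le
  have hid := hardy_identity p hp g hg M hM
  set I := ∫⁻ t in Ioc (0 : ℝ) 1, hardyAvg g t ^ p with hI
  set P := (∫⁻ u in Ioc (0 : ℝ) 1, (g u : ℝ≥0∞)) ^ p
  have hIfin : I ≠ ⊤ := by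
    have : I ≤ ∫⁻ t in Ioc (0 : ℝ) 1, (M : ℝ≥0∞) ^ p :=
      setLIntegral_mono measurable_const fun t _ =>
        ENNReal.rpow_le_rpow (hardyAvg_le_of_bounded g M hM t) (by linarith)
    refine ne_top_of_le_ne_top ?_ this
    simp [ENNReal.rpow_eq_top_iff, (by linarith : ¬ p < 0)]
  have hmain : ENNReal.ofReal q * (I + ENNReal.ofReal (1 / (p - 1)) * P) ≤
      ENNReal.ofReal (q - 1) * I + ENNReal.ofReal (p / (p - 1)) ^ q
        * ∫⁻ t in Ioc (0 : ℝ) 1, hardyAvg g t ^ (p - q) * (g t : ℝ≥0∞) ^ q := by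
    have m1 : Measurable fun t => hardyAvg g t ^ (p - 1) * (g t : ℝ≥0∞) :=
      (hA.pow_const _).mul (by fun_prop)
    have m2 : Measurable fun t => hardyAvg g t ^ (p - q) * (g t : ℝ≥0∞) ^ q :=
      (hA.pow_const _).mul (by fun_prop)
    have m3 : Measurable fun t => hardyAvg g t ^ p := hA.pow_const _
    rw [hid, ← lintegral_const_mul _ m1, ← lintegral_const_mul _ (m1.const_mul _),
      hI, ← lintegral_const_mul _ m3, ← lintegral_const_mul _ m2,
      ← lintegral_add_right _ (m2.const_mul _)]
    refine setLIntegral_mono ((m3.const_mul _).add (m2.const_mul _)) fun t _ => ?_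
    exact bernoulli_ennreal p q _ hp hq1 hqp hc _
      (ne_top_of_le_ne_top ENNReal.coe_ne_top (hardyAvg_le_of_bounded g M hM t)) _
  have hsplit : ENNReal.ofReal q * (I + ENNReal.ofReal (1 / (p - 1)) * P) =
      ENNReal.ofReal (q - 1) * I + (I + ENNReal.ofReal (q / (p - 1)) * P) := by
    rw [mul_add, ← mul_assoc, ← ENNReal.ofReal_mul (by linarith), mul_one_div, ← add_assoc]
    congr 1
    conv_lhs => rw [show q = (q - 1) + 1 by ring,
      ENNReal.ofReal_add (by linarith) zero_le_one, ENNReal.ofReal_one, add_mul, one_mul]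
  rw [hsplit] at hmain
  exact (ENNReal.add_le_add_iff_left (ENNReal.mul_ne_top ENNReal.ofReal_ne_top hIfin)).1 hmain

lemma hardyAvg_mono {g₁ g₂ : ℝ → ℝ≥0} (h : ∀ x, g₁ x ≤ g₂ x) (t : ℝ) :
    hardyAvg g₁ t ≤ hardyAvg g₂ t := by
  unfold hardyAvg
  gcongr with u
  exact h u

lemma iSup_lintegral_truncation (g : ℝ → ℝ≥0) (hg : Measurable g) (t : ℝ) :
    ⨆ n : ℕ, (∫⁻ u in Ioc (0 : ℝ) t, ((min (g u) n : ℝ≥0) : ℝ≥0∞)) =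
      ∫⁻ u in Ioc (0 : ℝ) t, (g u : ℝ≥0∞) := by
  rw [← lintegral_iSup (fun n => by fun_prop)]
  · refine lintegral_congr fun u => le_antisymm (iSup_le fun n => by simp) ?_
    obtain ⟨n, hn⟩ := exists_nat_ge (g u)
    refine le_iSup_of_le n ?_
    rw [min_eq_left hn]
  · intro m n hmn u
    simp only [ENNReal.coe_le_coe]
    gcongr

lemma iSup_rpow {r : ℝ} (hr : 0 < r) (s : ℕ → ℝ≥0∞) : (⨆ n, s n) ^ r = ⨆ n, s n ^ r :=
  (ENNReal.orderIsoRpow r hr).map_iSup s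

/-- Theorem 1: the main Hardy-type inequality of the paper. -/
theorem hardy_with_remainder_q (p q : ℝ) (hp : 1 < p) (hq1 : 1 ≤ q) (hqp : q ≤ p)
    (g : ℝ → ℝ≥0) (hg : Measurable g)
    (hint : (∫⁻ u in Set.Ioc (0 : ℝ) 1, (g u : ℝ≥0∞)) ≠ ⊤)
    (f : ℝ≥0∞) (hf : f = ∫⁻ u in Set.Ioc (0 : ℝ) 1, (g u : ℝ≥0∞)) :
    (∫⁻ t in Set.Ioc (0 : ℝ) 1, hardyAvg g t ^ p)
      + ENNReal.ofReal (q / (p - 1)) * f ^ p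
    ≤ ENNReal.ofReal (p / (p - 1)) ^ q
        * ∫⁻ t in Set.Ioc (0 : ℝ) 1, hardyAvg g t ^ (p - q) * (g t : ℝ≥0∞) ^ q := by
  subst hf
  have hp0 : 0 < p := by linarith
  set gn : ℕ → ℝ → ℝ≥0 := fun n u => min (g u) n with hgn
  have hgnm : ∀ n, Measurable (gn n) := fun n => by fun_prop
  have hmono : ∀ m n, m ≤ n → ∀ u, gn m u ≤ gn n u := fun m n hmn u => by
    simp only [hgn]; gcongr
  have hI : (∫⁻ t in Ioc (0 : ℝ) 1, hardyAvg g t ^ p) =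
      ⨆ n, ∫⁻ t in Ioc (0 : ℝ) 1, hardyAvg (gn n) t ^ p := by
    rw [← lintegral_iSup (fun n => (measurable_hardyAvg _).pow_const _)]
    · refine lintegral_congr fun t => ?_
      rw [← iSup_rpow hp0]
      congr 1
      simp only [hardyAvg, hgn]
      rw [← ENNReal.mul_iSup, iSup_lintegral_truncation g hg]
    · exact fun m n hmn t => ENNReal.rpow_le_rpow (hardyAvg_mono (hmono m n hmn) t) hp0.le
  have hP : (∫⁻ u in Ioc (0 : ℝ) 1, (g u : ℝ≥0∞)) ^ p =
      ⨆ n, (∫⁻ u in Ioc (0 : ℝ) 1, (gn n u : ℝ≥0∞)) ^ p := by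
    rw [← iSup_rpow hp0, iSup_lintegral_truncation g hg]
  rw [hI, hP, ENNReal.mul_iSup, ENNReal.iSup_add_iSup_of_monotone]
  · refine iSup_le fun n => (hardy_bounded p q hp hq1 hqp (gn n) (hgnm n) n
      fun x => min_le_right _ _).trans ?_
    have hle : ∀ u, gn n u ≤ g u := fun u => min_le_left _ _
    gcongr with t
    · exact hardyAvg_mono hle t
    · exact hle t
  · refine fun m n hmn => lintegral_mono fun t =>
      ENNReal.rpow_le_rpow (hardyAvg_mono (hmono m n hmn) t) hp0.le
  · intro m n hmn
    simp only
    gcongr with u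
    exact hmono m n hmn u
end

section
/- Let p > 1, 1 < q ≤ p and f > 0. Then for every x > 0, x − x^{1−q} (x + f^p/(p−1))^q < −(q/(p−1)) f^p. -/
/-! Put `c = f ^ p / (p - 1) > 0`. Factoring `x` out of `x + c` gives
`x ^ (1 - q) * (x + c) ^ q = x * (1 + c / x) ^ q`, and the strict Bernoulli inequality with
exponent `q > 1` bounds this below by `x * (1 + q * (c / x)) = x + q * c`. -/

/-- The key elementary estimate: `G(x) = x − x^{1−q}(x + f^p/(p−1))^q` is everywhere
strictly below its limit `−(q/(p−1)) f^p` at `+∞`. -/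
theorem aux_function_estimate (p q f x : ℝ) (hp : 1 < p) (hq : 1 < q) (hqp : q ≤ p)
    (hf : 0 < f) (hx : 0 < x) :
    x - x ^ (1 - q) * (x + f ^ p / (p - 1)) ^ q < -(q / (p - 1)) * f ^ p := by
  have hc : 0 < f ^ p / (p - 1) := div_pos (Real.rpow_pos_of_pos hf p) (by linarith)
  have hr : -(q / (p - 1)) * f ^ p = -(q * (f ^ p / (p - 1))) := by ring
  rw [hr]
  generalize f ^ p / (p - 1) = c at hc ⊢
  have hs : 0 < c / x := div_pos hc hx
  have hB := one_add_mul_self_lt_rpow_one_add (by linarith : -1 ≤ c / x) hs.ne' hq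
  have hfac : x + c = x * (1 + c / x) := by field_simp
  have hG : x ^ (1 - q) * (x + c) ^ q = x * (1 + c / x) ^ q := by
    rw [hfac, Real.mul_rpow hx.le (by linarith), ← mul_assoc, ← Real.rpow_add hx,
      sub_add_cancel, Real.rpow_one]
  have hlin : x * (1 + q * (c / x)) = x + q * c := by field_simp
  have hmul := mul_lt_mul_of_pos_left hB hx
  rw [hG]
  linarith
end

section
/- Let p > 1, 1 ≤ q ≤ p and 0 < a < 1/p, and define g_a(t) = t^{−a} for t ∈ (0,1]. Then (1/t)∫₀^t g_a(u) du = t^{−a}/(1−a) for every t ∈ (0,1], and ∫₀¹ ((1/t)∫₀^t g_a(u) du)^p dt = (1/(1−a))^q · ∫₀¹ ((1/t)∫₀^t g_a(u) du)^{p−q} g_a(t)^q dt, with both integrals finite. -/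
/-!
The average of `t ^ (-a)` over `(0, t]` is `t ^ (-a) / (1 - a)`, by the explicit integral of a
power (`lintegral_rpow_Ioc`). Thus `hardyAvg (gPow a) = c * gPow a` on `(0, 1]` with
`c = 1 / (1 - a)`, and splitting `A ^ p = A ^ (p - q) * A ^ q` for `A = hardyAvg (gPow a)` gives
the integral identity pointwise. The left integral is a multiple of `∫₀¹ t ^ (-a p) dt`, finite
because `a p < 1`; the right one is then finite because `c ^ q ≠ 0`.
-/

open MeasureTheory Set
open scoped ENNReal NNReal

/-- The extremal power function `g_a(t) = t^{-a}`. -/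
noncomputable def gPow (a t : ℝ) : ℝ≥0 := Real.toNNReal (t ^ (-a))

/-- The `∫⁻`-integral of `u ^ r` over `(0, t]`, for `-1 < r`. -/
lemma lintegral_rpow_Ioc {r t : ℝ} (hr : -1 < r) (ht : 0 ≤ t) :
    ∫⁻ u in Set.Ioc (0 : ℝ) t, ENNReal.ofReal (u ^ r)
      = ENNReal.ofReal (t ^ (r + 1) / (r + 1)) := by
  have hint : IntegrableOn (fun u : ℝ => u ^ r) (Set.Ioc 0 t) :=
    (intervalIntegrable_iff_integrableOn_Ioc_of_le ht).1
      (intervalIntegral.intervalIntegrable_rpow' hr)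
  rw [← ofReal_integral_eq_lintegral_ofReal hint
      (ae_restrict_of_forall_mem measurableSet_Ioc fun u hu => Real.rpow_nonneg hu.1.le r),
    ← intervalIntegral.integral_of_le ht, integral_rpow (Or.inl hr),
    Real.zero_rpow (by linarith), sub_zero]

lemma hardyAvg_gPow {a t : ℝ} (ha : a < 1) (ht : 0 < t) :
    hardyAvg (gPow a) t = ENNReal.ofReal (t ^ (-a) / (1 - a)) := by
  have h : ∫⁻ u in Set.Ioc (0 : ℝ) t, (gPow a u : ℝ≥0∞)
      = ENNReal.ofReal (t ^ (-a + 1) / (-a + 1)) :=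
    lintegral_rpow_Ioc (by linarith) ht.le
  rw [hardyAvg, h, ← ENNReal.ofReal_inv_of_pos ht,
    ← ENNReal.ofReal_mul (inv_nonneg.2 ht.le), Real.rpow_add_one ht.ne']
  congr 1
  rw [neg_add_eq_sub]
  field_simp

/-- Sharpness of the constant `(p/(p−1))^q`: for `g_a(t) = t^{−a}` with `0 < a < 1/p`,
one has `(1/t)∫₀^t g_a = t^{−a}/(1−a)` and equality in the Hardy inequality with
constant `(1/(1−a))^q` instead of `(p/(p−1))^q`, both integrals being finite. -/
theorem sharpness_first_constant (p q a : ℝ) (hp : 1 < p) (hq1 : 1 ≤ q) (hqp : q ≤ p)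
    (ha0 : 0 < a) (ha : a < 1 / p) :
    (∀ t ∈ Set.Ioc (0 : ℝ) 1,
        hardyAvg (gPow a) t = ENNReal.ofReal (t ^ (-a) / (1 - a)))
    ∧ (∫⁻ t in Set.Ioc (0 : ℝ) 1, hardyAvg (gPow a) t ^ p)
        = ENNReal.ofReal (1 / (1 - a)) ^ q
            * ∫⁻ t in Set.Ioc (0 : ℝ) 1,
                hardyAvg (gPow a) t ^ (p - q) * (gPow a t : ℝ≥0∞) ^ q
    ∧ (∫⁻ t in Set.Ioc (0 : ℝ) 1, hardyAvg (gPow a) t ^ p) ≠ ⊤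
    ∧ (∫⁻ t in Set.Ioc (0 : ℝ) 1,
          hardyAvg (gPow a) t ^ (p - q) * (gPow a t : ℝ≥0∞) ^ q) ≠ ⊤ := by
  have hp0 : 0 < p := by linarith
  have hap : a * p < 1 := (lt_div_iff₀ hp0).1 ha
  have ha1 : a < 1 := by nlinarith
  have hA : ∀ t ∈ Set.Ioc (0 : ℝ) 1,
      hardyAvg (gPow a) t = ENNReal.ofReal (t ^ (-a) / (1 - a)) :=
    fun t ht => hardyAvg_gPow ha1 ht.1
  have hc : 0 < 1 / (1 - a) := one_div_pos.2 (by linarith)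
  have hAc : ∀ t ∈ Set.Ioc (0 : ℝ) 1,
      hardyAvg (gPow a) t = ENNReal.ofReal (1 / (1 - a)) * (gPow a t : ℝ≥0∞) := by
    intro t ht
    rw [hA t ht, div_eq_mul_one_div, mul_comm, ENNReal.ofReal_mul hc.le]
    rfl
  have hcq_top : ENNReal.ofReal (1 / (1 - a)) ^ q ≠ ⊤ :=
    ENNReal.rpow_ne_top_of_nonneg (by linarith) ENNReal.ofReal_ne_top
  have hcq_zero : ENNReal.ofReal (1 / (1 - a)) ^ q ≠ 0 :=
    (ENNReal.rpow_pos (ENNReal.ofReal_pos.2 hc) ENNReal.ofReal_ne_top).ne'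
  have heq : (∫⁻ t in Set.Ioc (0 : ℝ) 1, hardyAvg (gPow a) t ^ p)
      = ENNReal.ofReal (1 / (1 - a)) ^ q
          * ∫⁻ t in Set.Ioc (0 : ℝ) 1,
              hardyAvg (gPow a) t ^ (p - q) * (gPow a t : ℝ≥0∞) ^ q := by
    rw [← lintegral_const_mul' _ _ hcq_top]
    refine setLIntegral_congr_fun measurableSet_Ioc fun t ht => ?_
    calc hardyAvg (gPow a) t ^ p
        = hardyAvg (gPow a) t ^ (p - q) * hardyAvg (gPow a) t ^ q := by
          rw [← ENNReal.rpow_add_of_nonneg _ _ (by linarith) (by linarith), sub_add_cancel]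
      _ = hardyAvg (gPow a) t ^ (p - q)
            * (ENNReal.ofReal (1 / (1 - a)) * (gPow a t : ℝ≥0∞)) ^ q := by
          rw [← hAc t ht]
      _ = ENNReal.ofReal (1 / (1 - a)) ^ q
            * (hardyAvg (gPow a) t ^ (p - q) * (gPow a t : ℝ≥0∞) ^ q) := by
          rw [ENNReal.mul_rpow_of_nonneg _ _ (by linarith), mul_left_comm]
  have hfin : (∫⁻ t in Set.Ioc (0 : ℝ) 1, hardyAvg (gPow a) t ^ p) ≠ ⊤ := by
    have h : (∫⁻ t in Set.Ioc (0 : ℝ) 1, hardyAvg (gPow a) t ^ p)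
        = ∫⁻ t in Set.Ioc (0 : ℝ) 1,
            ENNReal.ofReal (1 / (1 - a)) ^ p * ENNReal.ofReal (t ^ (-a * p)) := by
      refine setLIntegral_congr_fun measurableSet_Ioc fun t ht => ?_
      have hg : (gPow a t : ℝ≥0∞) = ENNReal.ofReal (t ^ (-a)) := rfl
      rw [hAc t ht, ENNReal.mul_rpow_of_nonneg _ _ hp0.le, hg,
        ENNReal.ofReal_rpow_of_nonneg (Real.rpow_nonneg ht.1.le _) hp0.le,
        ← Real.rpow_mul ht.1.le]
    have hcp_top : ENNReal.ofReal (1 / (1 - a)) ^ p ≠ ⊤ :=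
      ENNReal.rpow_ne_top_of_nonneg hp0.le ENNReal.ofReal_ne_top
    rw [h, lintegral_const_mul' _ _ hcp_top, lintegral_rpow_Ioc (by linarith) zero_le_one]
    exact ENNReal.mul_ne_top hcp_top ENNReal.ofReal_ne_top
  refine ⟨hA, heq, hfin, fun htop => hfin ?_⟩
  rw [heq, htop, ENNReal.mul_top hcq_zero]
end

section
/- Let g : (0,1] → [0,∞) be non-increasing with g^q integrable on (0,1], let p > q > 1 and δ ∈ (0,1). Then ∫₀^δ ((1/t)∫₀^t g(u)^q du)^{p/q−1} g(t)^q dt ≤ ((p−q)/p) ∫₀^δ ((1/t)∫₀^t g(u)^q du)^{p/q} dt + (q/p) · δ · ((1/δ)∫₀^δ g(u)^q du)^{p/q}, where all integrals of nonnegative functions are taken with values in [0,∞]. -/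
/-!
Put `h = g ^ q`, `r = p / q > 1`, `H t = ∫₀ᵗ h` and `A t = H t / t`. Wherever `h` is continuous, hence
off a countable set because `h` is monotone, `H` has derivative `h`, and
`(t * A t ^ r)' = r * A t ^ (r - 1) * h t - (r - 1) * A t ^ r`.
Integrating over `[ε, δ]` with `ε > 0`, where every function involved is integrable, and dropping the
boundary term `-ε * A ε ^ r ≤ 0` gives the inequality over `(ε, δ]`
(`setLIntegral_hardyAvg_le_of_pos`). The sets `(ε, δ]` exhaust `(0, δ]` as `ε → 0`, and the
right-hand side is bounded independently of `ε`, so monotone convergence finishes the proof. In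
particular no finiteness of the integrals over `(0, δ]` is needed.
-/

open MeasureTheory Set
open scoped ENNReal NNReal

/-- The derivative of `t * A t ^ r` for `A = H / t`, with `y` the derivative of `H` at `t`. -/
lemma hasDerivAt_mul_avg_rpow {H : ℝ → ℝ} {r t y : ℝ} (hr : 1 < r) (ht : 0 < t)
    (hH : 0 ≤ H t) (hd : HasDerivAt H y t) :
    HasDerivAt (fun s => s * (H s / s) ^ r)
      (r * ((H t / t) ^ (r - 1) * y) - (r - 1) * (H t / t) ^ r) t := by
  have hA : 0 ≤ H t / t := by positivity
  have e : (H t / t) ^ r = (H t / t) ^ (r - 1) * (H t / t) := by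
    conv_lhs => rw [show r = (r - 1) + 1 by ring]
    rw [Real.rpow_add_of_nonneg hA (by linarith) zero_le_one, Real.rpow_one]
  have h1 := (hasDerivAt_id t).mul
    ((hd.div (hasDerivAt_id t) ht.ne').rpow_const (p := r) (Or.inr hr.le))
  refine h1.congr_deriv ?_
  simp only [Pi.div_apply, id]
  rw [e]
  field_simp
  ring

section

variable {h : ℝ → ℝ≥0}

lemma integrableOn_of_antitoneOn (hmono : AntitoneOn h (Ioc (0 : ℝ) 1))
    (hint : (∫⁻ u in Ioc (0 : ℝ) 1, (h u : ℝ≥0∞)) ≠ ⊤) :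
    IntegrableOn (fun u => (h u : ℝ)) (Ioc (0 : ℝ) 1) := by
  refine ⟨((aemeasurable_restrict_of_antitoneOn measurableSet_Ioc
    hmono).coe_nnreal_real).aestronglyMeasurable, ?_⟩
  rw [hasFiniteIntegral_iff_enorm]
  simpa using lt_top_iff_ne_top.2 hint

lemma hardyAvg_eq_ofReal (hi : IntegrableOn (fun u => (h u : ℝ)) (Ioc (0 : ℝ) 1))
    {t : ℝ} (ht : t ∈ Ioc (0 : ℝ) 1) :
    hardyAvg h t = ENNReal.ofReal ((∫ u in (0 : ℝ)..t, (h u : ℝ)) / t) := by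
  have h1 : IntegrableOn (fun u => (h u : ℝ)) (Ioc (0 : ℝ) t) :=
    hi.mono_set (Ioc_subset_Ioc_right ht.2)
  rw [hardyAvg, intervalIntegral.integral_of_le ht.1.le, ENNReal.ofReal_div_of_pos ht.1,
    ofReal_integral_eq_lintegral_ofReal h1 (Filter.Eventually.of_forall fun u => (h u).2),
    ENNReal.div_eq_inv_mul]
  simp

/-- The integrated identity over `(ε, δ]`, in which all integrals are finite, with the nonpositive
boundary term at `ε` dropped. -/
lemma setLIntegral_hardyAvg_le_of_pos (hmono : AntitoneOn h (Ioc (0 : ℝ) 1))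
    (hi : IntegrableOn (fun u => (h u : ℝ)) (Ioc (0 : ℝ) 1))
    {r ε δ : ℝ} (hr : 1 < r) (hε : 0 < ε) (hεδ : ε ≤ δ) (hδ : δ < 1) :
    (∫⁻ t in Ioc ε δ, hardyAvg h t ^ (r - 1) * (h t : ℝ≥0∞))
      ≤ ENNReal.ofReal (1 - r⁻¹) * (∫⁻ t in Ioc ε δ, hardyAvg h t ^ r)
        + ENNReal.ofReal r⁻¹ * ENNReal.ofReal δ * hardyAvg h δ ^ r := by
  have hδ0 : 0 < δ := hε.trans_le hεδ
  have hr0 : 0 < r := by linarith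
  set H : ℝ → ℝ := fun t => ∫ u in (0 : ℝ)..t, (h u : ℝ) with hHdef
  have hH0 : ∀ t, 0 ≤ t → 0 ≤ H t := fun t ht =>
    intervalIntegral.integral_nonneg ht fun u _ => (h u).2
  have hA0 : ∀ t, 0 ≤ t → 0 ≤ H t / t := fun t ht => div_nonneg (hH0 t ht) ht
  have hsub : Ioc ε δ ⊆ Ioc (0 : ℝ) 1 := Ioc_subset_Ioc hε.le hδ.le
  have hu : uIcc ε δ = Icc ε δ := uIcc_of_le hεδ
  have hiε : IntervalIntegrable (fun u => (h u : ℝ)) volume ε δ :=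
    (intervalIntegrable_iff_integrableOn_Ioc_of_le hεδ).2 (hi.mono_set hsub)
  have hHc : ContinuousOn H (Icc ε δ) := by
    have h1 : ContinuousOn H (uIcc 0 1) :=
      intervalIntegral.continuousOn_primitive_interval
        (by rw [uIcc_of_le zero_le_one]; exact (integrableOn_Icc_iff_integrableOn_Ioc).2 hi)
    rw [uIcc_of_le zero_le_one] at h1
    exact h1.mono (Icc_subset_Icc hε.le hδ.le)
  have hAc : ContinuousOn (fun t => H t / t) (Icc ε δ) :=
    hHc.div continuousOn_id fun t ht => (hε.trans_le ht.1).ne'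
  have hAr : ∀ s : ℝ, 0 ≤ s → ContinuousOn (fun t => (H t / t) ^ s) (Icc ε δ) := fun s hs =>
    ContinuousOn.rpow_const (p := s) hAc (fun t _ => Or.inr hs)
  have i1 : IntervalIntegrable (fun t => (H t / t) ^ (r - 1) * (h t : ℝ)) volume ε δ :=
    hiε.continuousOn_mul (by rw [hu]; exact hAr _ (by linarith))
  have i2 : IntervalIntegrable (fun t => (H t / t) ^ r) volume ε δ :=
    ContinuousOn.intervalIntegrable (by rw [hu]; exact hAr _ hr0.le)
  have key := integral_eq_of_hasDerivAt_off_countable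
    (fun s => s * (H s / s) ^ r)
    (fun t => r * ((H t / t) ^ (r - 1) * (h t : ℝ)) - (r - 1) * (H t / t) ^ r)
    (a := ε) (b := δ) hmono.countable_not_continuousWithinAt
    (by rw [hu]; exact continuousOn_id.mul (hAr _ hr0.le))
    (by
      rintro t ⟨ht, hts⟩
      rw [min_eq_left hεδ, max_eq_right hεδ] at ht
      have ht0 : 0 < t := hε.trans ht.1
      have ht1 : t < 1 := ht.2.trans hδ
      have hn : Ioc (0 : ℝ) 1 ∈ nhds t := Ioc_mem_nhds ht0 ht1
      have hc : ContinuousAt h t := by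
        by_contra hcon
        exact hts ⟨⟨ht0, ht1.le⟩, fun hw => hcon (hw.continuousAt hn)⟩
      refine hasDerivAt_mul_avg_rpow hr ht0 (hH0 t ht0.le) ?_
      refine intervalIntegral.integral_hasDerivAt_right ?_ ⟨_, hn, hi.1⟩
        (NNReal.continuous_coe.continuousAt.comp hc)
      exact (intervalIntegrable_iff_integrableOn_Ioc_of_le ht0.le).2
        (hi.mono_set (Ioc_subset_Ioc_right ht1.le)))
    ((i1.const_mul r).sub (i2.const_mul (r - 1)))
  rw [intervalIntegral.integral_sub (i1.const_mul r) (i2.const_mul (r - 1)),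
    intervalIntegral.integral_const_mul, intervalIntegral.integral_const_mul] at key
  have hreal : (∫ t in ε..δ, (H t / t) ^ (r - 1) * (h t : ℝ))
      ≤ (1 - r⁻¹) * (∫ t in ε..δ, (H t / t) ^ r) + r⁻¹ * δ * (H δ / δ) ^ r := by
    have hb : 0 ≤ ε * (H ε / ε) ^ r := mul_nonneg hε.le (Real.rpow_nonneg (hA0 ε hε.le) _)
    have : r * (∫ t in ε..δ, (H t / t) ^ (r - 1) * (h t : ℝ))
      ≤ r * ((1 - r⁻¹) * (∫ t in ε..δ, (H t / t) ^ r) + r⁻¹ * δ * (H δ / δ) ^ r) := by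
      have e : r * ((1 - r⁻¹) * (∫ t in ε..δ, (H t / t) ^ r) + r⁻¹ * δ * (H δ / δ) ^ r)
        = (r - 1) * (∫ t in ε..δ, (H t / t) ^ r) + δ * (H δ / δ) ^ r := by
        field_simp
      rw [e]
      linarith
    exact le_of_mul_le_mul_left this hr0
  have hr1 : 0 ≤ 1 - r⁻¹ := sub_nonneg.2 (inv_le_one_of_one_le₀ hr.le)
  have hAδ : 0 ≤ (H δ / δ) ^ r := Real.rpow_nonneg (hA0 δ hδ0.le) _
  have e1 : (∫⁻ t in Ioc ε δ, hardyAvg h t ^ (r - 1) * (h t : ℝ≥0∞))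
      = ENNReal.ofReal (∫ t in ε..δ, (H t / t) ^ (r - 1) * (h t : ℝ)) := by
    rw [intervalIntegral.integral_of_le hεδ, ofReal_integral_eq_lintegral_ofReal
      ((intervalIntegrable_iff_integrableOn_Ioc_of_le hεδ).1 i1)
      ((ae_restrict_iff' measurableSet_Ioc).2 (Filter.Eventually.of_forall fun t ht =>
        mul_nonneg (Real.rpow_nonneg (hA0 t (hsub ht).1.le) _) (h t).2))]
    refine setLIntegral_congr_fun measurableSet_Ioc fun t ht => ?_
    have := hA0 t (hsub ht).1.le
    rw [hardyAvg_eq_ofReal hi (hsub ht), ENNReal.ofReal_mul (Real.rpow_nonneg this _),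
      ENNReal.ofReal_rpow_of_nonneg this (by linarith), ENNReal.ofReal_coe_nnreal]
  have e2 : (∫⁻ t in Ioc ε δ, hardyAvg h t ^ r)
      = ENNReal.ofReal (∫ t in ε..δ, (H t / t) ^ r) := by
    rw [intervalIntegral.integral_of_le hεδ, ofReal_integral_eq_lintegral_ofReal
      ((intervalIntegrable_iff_integrableOn_Ioc_of_le hεδ).1 i2)
      ((ae_restrict_iff' measurableSet_Ioc).2 (Filter.Eventually.of_forall fun t ht =>
        Real.rpow_nonneg (hA0 t (hsub ht).1.le) _))]
    refine setLIntegral_congr_fun measurableSet_Ioc fun t ht => ?_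
    rw [hardyAvg_eq_ofReal hi (hsub ht),
      ENNReal.ofReal_rpow_of_nonneg (hA0 t (hsub ht).1.le) hr0.le]
  rw [e1, e2, hardyAvg_eq_ofReal hi ⟨hδ0, hδ.le⟩,
    ENNReal.ofReal_rpow_of_nonneg (hA0 δ hδ0.le) hr0.le, ← ENNReal.ofReal_mul hr1,
    ← ENNReal.ofReal_mul (by positivity), ← ENNReal.ofReal_mul (by positivity),
    ← ENNReal.ofReal_add _ (by positivity)]
  · exact ENNReal.ofReal_le_ofReal hreal
  · exact mul_nonneg hr1 (intervalIntegral.integral_nonneg hεδ fun t ht =>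
      Real.rpow_nonneg (hA0 t (hε.le.trans ht.1)) _)

lemma setLIntegral_hardyAvg_le (hmono : AntitoneOn h (Ioc (0 : ℝ) 1))
    (hint : (∫⁻ u in Ioc (0 : ℝ) 1, (h u : ℝ≥0∞)) ≠ ⊤)
    {r δ : ℝ} (hr : 1 < r) (hδ : δ ∈ Ioo (0 : ℝ) 1) :
    (∫⁻ t in Ioc 0 δ, hardyAvg h t ^ (r - 1) * (h t : ℝ≥0∞))
      ≤ ENNReal.ofReal (1 - r⁻¹) * (∫⁻ t in Ioc 0 δ, hardyAvg h t ^ r)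
        + ENNReal.ofReal r⁻¹ * ENNReal.ofReal δ * hardyAvg h δ ^ r := by
  have hi := integrableOn_of_antitoneOn hmono hint
  have hU : Ioc (0 : ℝ) δ = ⋃ n : ℕ, Ioc (δ / (n + 1)) δ := by
    ext t
    simp only [mem_Ioc, mem_iUnion]
    constructor
    · rintro ⟨h0, h1⟩
      obtain ⟨n, hn⟩ := exists_nat_gt (δ / t)
      refine ⟨n, ?_, h1⟩
      rw [div_lt_iff₀ h0] at hn
      rw [div_lt_iff₀ (by positivity)]
      nlinarith
    · rintro ⟨n, h0, h1⟩
      exact ⟨(div_pos hδ.1 (by positivity)).trans h0, h1⟩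
  have hm : Monotone fun n : ℕ => Ioc (δ / ((n : ℝ) + 1)) δ := fun m n hmn =>
    Ioc_subset_Ioc_left (div_le_div_of_nonneg_left hδ.1.le (by positivity) (by gcongr))
  conv_lhs => rw [hU, setLIntegral_iUnion_of_directed _ hm.directed_le]
  refine iSup_le fun n => ?_
  have hpos : 0 < δ / ((n : ℝ) + 1) := div_pos hδ.1 (by positivity)
  refine (setLIntegral_hardyAvg_le_of_pos hmono hi hr hpos
    (div_le_self hδ.1.le (by linarith [n.cast_nonneg (α := ℝ)])) hδ.2).trans ?_
  gcongr

end

/-- Inequality (3.4): the exact Hardy identity applied to `g^q` with exponent `p/q`. -/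
theorem hardy_identity_applied_to_gq (g : ℝ → ℝ≥0)
    (hmono : AntitoneOn g (Set.Ioc (0 : ℝ) 1))
    (q p : ℝ) (hq : 1 < q) (hqp : q < p)
    (hint : (∫⁻ u in Set.Ioc (0 : ℝ) 1, ((g u : ℝ≥0∞)) ^ q) ≠ ⊤)
    (δ : ℝ) (hδ : δ ∈ Set.Ioo (0 : ℝ) 1) :
    (∫⁻ t in Set.Ioc (0 : ℝ) δ,
        hardyAvg (fun u => g u ^ q) t ^ (p / q - 1) * (g t : ℝ≥0∞) ^ q)
    ≤ ENNReal.ofReal ((p - q) / p)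
          * (∫⁻ t in Set.Ioc (0 : ℝ) δ, hardyAvg (fun u => g u ^ q) t ^ (p / q))
      + ENNReal.ofReal (q / p) * ENNReal.ofReal δ
          * hardyAvg (fun u => g u ^ q) δ ^ (p / q) := by
  have hq0 : 0 < q := by linarith
  have hp0 : 0 < p := by linarith
  have hco : ∀ u, ((g u ^ q : ℝ≥0) : ℝ≥0∞) = (g u : ℝ≥0∞) ^ q := fun u =>
    ENNReal.coe_rpow_of_nonneg _ hq0.le
  have hr : 1 < p / q := (one_lt_div hq0).2 hqp
  have key := setLIntegral_hardyAvg_le (h := fun u => g u ^ q) (r := p / q)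
    (fun a ha b hb hab => NNReal.rpow_le_rpow (hmono ha hb hab) hq0.le)
    (by simpa only [hco] using hint) hr hδ
  have e : 1 - q / p = (p - q) / p := by field_simp
  simpa only [hco, inv_div, e] using key
end

section
/- Let q > 1, c ≥ 1, and let g : (0,1] → [0,∞) be non-increasing with g^q integrable, satisfying (1/t)∫₀^t g(u)^q du ≤ c · ((1/t)∫₀^t g(u) du)^q for every t ∈ (0,1]. Let p ≥ q be such that k_p := 1 − c · ((p−q)/p) · (p/(p−1))^q > 0. Then for every δ ∈ (0,1], (1/δ)∫₀^δ ((1/t)∫₀^t g(u) du)^{p−q} g(t)^q dt ≤ (q c /(p k_p)) · ((1/δ)∫₀^δ g(u) du)^p, where all integrals of nonnegative functions are taken with values in [0,∞]. -/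
/-!
Write `A t = (1/t) ∫₀ᵗ g`, `Φ t = ∫₀ᵗ g ^ q`, `K = p / (p - 1)`, `β = c (p - q) / p` and
`γ = β (1 + q / (p - 1))`. Off the countably many discontinuities of `g`, `A' = (g - A) / t ≤ 0`, so
the reverse Hölder bound `Φ ≤ c t A ^ q` gives
`A ^ (p - q) g ^ q ≤ (A ^ (p - q) Φ)' + β (A ^ p - (t A ^ p)')`, while Young's inequality applied to
`(K g) · A ^ (q - 1)` gives the pointwise Hardy-type bound
`A ^ p ≤ K ^ q A ^ (p - q) g ^ q - q / (p - 1) · (t A ^ p)'`. Together (`pointwise_bound`),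
`(1 - β K ^ q) A ^ (p - q) g ^ q ≤ F'` with `F = A ^ (p - q) Φ - γ t A ^ p`.

Integrating over `[ε, δ]` (`truncated_bound`), the boundary term at `ε` may be dropped without any a
priori finiteness: Bernoulli's inequality gives `γ ≤ β K ^ q < 1`, and Jensen's inequality
`t A ^ q ≤ Φ` then gives `F ε ≥ 0`. At `δ` the reverse Hölder bound gives
`F δ ≤ (c - γ) δ A(δ) ^ p ≤ (c q / p) δ A(δ) ^ p`. Monotone convergence as `ε → 0` concludes.
-/

open MeasureTheory Set
open scoped ENNReal NNReal

/-- Young's inequality with the conjugate exponent eliminated. -/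
lemma young_rpow {q x y : ℝ} (hq : 1 < q) (hx : 0 ≤ x) (hy : 0 ≤ y) :
    x * y ^ (q - 1) ≤ x ^ q / q + y ^ q * ((q - 1) / q) := by
  have hq0 : q ≠ 0 := by positivity
  have hq1 : q - 1 ≠ 0 := by linarith
  have hc : q.HolderConjugate (q / (q - 1)) := by
    rw [Real.holderConjugate_iff]
    refine ⟨hq, ?_⟩
    field_simp
    ring
  have h := Real.young_inequality_of_nonneg hx (Real.rpow_nonneg hy (q - 1)) hc
  rw [← Real.rpow_mul hy, mul_div_cancel₀ _ hq1] at h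
  calc x * y ^ (q - 1) ≤ _ := h
    _ = _ := by field_simp

/-- With `a` the average, `P = ∫₀ᵗ g ^ q` and `x = g t`, the right-hand side is the derivative at
`t` of `A ^ (p - q) * Φ - γ * (t * A ^ p)`, where `A' = (g - A) / t`. -/
lemma pointwise_bound {q c p a x t P : ℝ} (hq : 1 < q) (hpq : q ≤ p)
    (ht : 0 < t) (ha : 0 < a) (hx : 0 ≤ x) (hxa : x ≤ a) (hP : P ≤ c * t * a ^ q) (hc : 0 ≤ c) :
    (1 - c * ((p - q) / p) * (p / (p - 1)) ^ q) * (a ^ (p - q) * x ^ q) ≤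
      ((x - a) / t * (p - q) * a ^ (p - q - 1)) * P + a ^ (p - q) * x ^ q
        - c * ((p - q) / p) * (1 + q / (p - 1)) *
          (a ^ p + t * ((x - a) / t * p * a ^ (p - 1))) := by
  have hp : 1 < p := by linarith
  have hp1 : 0 < p - 1 := by linarith
  have hr : 0 ≤ p - q := by linarith
  set K := p / (p - 1) with hK
  have hK0 : 0 < K := by positivity
  set β := c * ((p - q) / p) with hβ
  have hβ0 : 0 ≤ β := by positivity
  have e1 : a ^ (p - q - 1) * a ^ q = a ^ (p - 1) := by
    rw [← Real.rpow_add ha]; ring_nf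
  have e2 : a ^ (p - q) * a ^ (q - 1) = a ^ (p - 1) := by
    rw [← Real.rpow_add ha]; ring_nf
  have e3 : a ^ (p - q) * a ^ q = a ^ p := by
    rw [← Real.rpow_add ha]; ring_nf
  have e4 : a ^ (p - 1) * a = a ^ p := by
    rw [← Real.rpow_add_one ha.ne']; ring_nf
  have har : 0 < a ^ (p - q) := Real.rpow_pos_of_pos ha _
  set S := p * (a ^ (p - 1) * x) - (p - 1) * a ^ p with hS
  have hS' : a ^ p + t * ((x - a) / t * p * a ^ (p - 1)) = S := by
    rw [hS, ← e4]; field_simp; ring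
  -- Young's inequality with the weight `K` on `x`, multiplied by `a ^ (p - q)`
  have hY : a ^ p ≤ K ^ q * (a ^ (p - q) * x ^ q) - q / (p - 1) * S := by
    have h := mul_le_mul_of_nonneg_left
      (young_rpow hq (mul_nonneg hK0.le hx) ha.le) har.le
    rw [Real.mul_rpow hK0.le hx] at h
    have h1 : K * (a ^ (p - 1) * x) ≤
        K ^ q * (a ^ (p - q) * x ^ q) / q + a ^ p * ((q - 1) / q) := by
      calc K * (a ^ (p - 1) * x) = a ^ (p - q) * (K * x * a ^ (q - 1)) := by rw [← e2]; ring
        _ ≤ _ := h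
        _ = _ := by rw [← e3]; ring
    have h2 : S / (p - 1) = K * (a ^ (p - 1) * x) - a ^ p := by
      rw [hS, hK]; field_simp
    have h3 : q / (p - 1) * S = q * (K * (a ^ (p - 1) * x)) - q * a ^ p := by
      rw [div_mul_eq_mul_div, mul_div_assoc, h2]; ring
    have h4 := mul_le_mul_of_nonneg_left h1 (by linarith : 0 ≤ q)
    have h5 : q * (K ^ q * (a ^ (p - q) * x ^ q) / q + a ^ p * ((q - 1) / q)) =
      K ^ q * (a ^ (p - q) * x ^ q) + a ^ p * (q - 1) := by field_simp
    rw [h3]; linarith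
  -- the coefficient of `P` is nonpositive, so the reverse Hölder bound applies
  have hD : -(β * (a ^ p - S)) ≤ ((x - a) / t * (p - q) * a ^ (p - q - 1)) * P := by
    have hneg : (x - a) / t * (p - q) * a ^ (p - q - 1) ≤ 0 := by
      have : (x - a) / t ≤ 0 := div_nonpos_of_nonpos_of_nonneg (by linarith) ht.le
      exact mul_nonpos_of_nonpos_of_nonneg (mul_nonpos_of_nonpos_of_nonneg this hr)
        (Real.rpow_nonneg ha.le _)
    have h := mul_le_mul_of_nonpos_left hP hneg
    refine le_trans (le_of_eq ?_) h
    calc -(β * (a ^ p - S)) = c * (p - q) * (x - a) * a ^ (p - 1) := by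
          rw [hβ, hS, ← e4]; field_simp; ring
      _ = _ := by rw [← e1]; field_simp
  rw [hS']
  have := mul_le_mul_of_nonneg_left hY hβ0
  nlinarith

/-- The real-variable inequality on `[ε, δ]`, with a bound independent of `ε`. -/
lemma truncated_bound {q c p : ℝ} (hq : 1 < q) (hc : 1 ≤ c) (hpq : q ≤ p)
    (hkp : 0 < 1 - c * ((p - q) / p) * (p / (p - 1)) ^ q)
    {g : ℝ → ℝ} (hg0 : ∀ u, 0 ≤ g u) (hmono : AntitoneOn g (Ioc 0 1))
    (hi : IntervalIntegrable g volume 0 1)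
    (hiq : IntervalIntegrable (fun u => g u ^ q) volume 0 1)
    (hpos : ∀ t ∈ Ioc (0 : ℝ) 1, 0 < ∫ u in 0..t, g u)
    (hRH : ∀ t ∈ Ioc (0 : ℝ) 1,
      ∫ u in 0..t, g u ^ q ≤ c * t * ((∫ u in 0..t, g u) / t) ^ q)
    {ε δ : ℝ} (hε : 0 < ε) (hεδ : ε ≤ δ) (hδ : δ ≤ 1) :
    IntervalIntegrable (fun t => ((∫ u in 0..t, g u) / t) ^ (p - q) * g t ^ q) volume ε δ ∧
    (1 - c * ((p - q) / p) * (p / (p - 1)) ^ q) *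
      (∫ t in ε..δ, ((∫ u in 0..t, g u) / t) ^ (p - q) * g t ^ q) ≤
      c * q / p * (δ * ((∫ u in 0..δ, g u) / δ) ^ p) := by
  have hp1 : 0 < p - 1 := by linarith
  have hp0 : 0 < p := by linarith
  set k := 1 - c * ((p - q) / p) * (p / (p - 1)) ^ q with hk
  set γ := c * ((p - q) / p) * (1 + q / (p - 1)) with hγ
  have hβ0 : 0 ≤ c * ((p - q) / p) :=
    mul_nonneg (by linarith) (div_nonneg (by linarith) hp0.le)
  set A : ℝ → ℝ := fun t => (∫ u in 0..t, g u) / t with hA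
  set Φ : ℝ → ℝ := fun t => ∫ u in 0..t, g u ^ q with hΦ
  have hsub : ∀ {t : ℝ}, t ∈ Ioc (0 : ℝ) 1 → uIcc 0 t ⊆ uIcc (0 : ℝ) 1 := fun {t} ht => by
    rw [uIcc_of_le ht.1.le, uIcc_of_le zero_le_one]; exact Icc_subset_Icc le_rfl ht.2
  have hgt : ∀ t ∈ Ioc (0 : ℝ) 1, IntervalIntegrable g volume 0 t :=
    fun t ht => hi.mono_set (hsub ht)
  have hgqt : ∀ t ∈ Ioc (0 : ℝ) 1, IntervalIntegrable (fun u => g u ^ q) volume 0 t :=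
    fun t ht => hiq.mono_set (hsub ht)
  have hA0 : ∀ t ∈ Ioc (0 : ℝ) 1, 0 < A t := fun t ht => div_pos (hpos t ht) ht.1
  have hgA : ∀ t ∈ Ioc (0 : ℝ) 1, g t ≤ A t := by
    intro t ht
    rw [hA]
    simp only
    rw [le_div_iff₀ ht.1]
    have h : ∫ _ in (0 : ℝ)..t, g t ≤ ∫ u in (0 : ℝ)..t, g u :=
      intervalIntegral.integral_mono_on_of_le_Ioo ht.1.le (by simp) (hgt t ht)
        fun u hu => hmono ⟨hu.1, hu.2.le.trans ht.2⟩ ht hu.2.le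
    simpa [mul_comm] using h
  -- Jensen's inequality, by integrating Young's inequality
  have hJ : ∀ t ∈ Ioc (0 : ℝ) 1, t * A t ^ q ≤ Φ t := by
    intro t ht
    have ha := hA0 t ht
    have h : ∫ u in (0 : ℝ)..t, g u * A t ^ (q - 1) ≤
        ∫ u in (0 : ℝ)..t, (g u ^ q / q + A t ^ q * ((q - 1) / q)) :=
      intervalIntegral.integral_mono_on ht.1.le ((hgt t ht).mul_const _)
        (((hgqt t ht).div_const _).add (by simp)) fun u _ => young_rpow hq (hg0 u) ha.le
    rw [intervalIntegral.integral_mul_const,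
      intervalIntegral.integral_add ((hgqt t ht).div_const _) (by simp),
      intervalIntegral.integral_div, intervalIntegral.integral_const] at h
    have e : ∫ u in (0 : ℝ)..t, g u = t * A t := by
      rw [hA]; simp only; rw [mul_div_cancel₀ _ ht.1.ne']
    have e4 : A t * A t ^ (q - 1) = A t ^ q := by
      rw [mul_comm, ← Real.rpow_add_one ha.ne']; ring_nf
    rw [e, mul_assoc, e4] at h
    change t * A t ^ q ≤ Φ t / q + _ at h
    have h4 := mul_le_mul_of_nonneg_left h (by linarith : 0 ≤ q)
    have h5 : q * (Φ t / q + (t - 0) • (A t ^ q * ((q - 1) / q))) =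
      Φ t + t * A t ^ q * (q - 1) := by simp only [smul_eq_mul]; field_simp; ring
    nlinarith
  have hsubI : Icc ε δ ⊆ Ioc (0 : ℝ) 1 := fun t ht => ⟨hε.trans_le ht.1, ht.2.trans hδ⟩
  have h01 : Icc ε δ ⊆ uIcc (0 : ℝ) 1 := by
    rw [uIcc_of_le zero_le_one]; exact hsubI.trans Ioc_subset_Icc_self
  have hcA : ContinuousOn A (Icc ε δ) := by
    refine ContinuousOn.div ?_ continuousOn_id fun t ht => (hsubI ht).1.ne'
    exact (intervalIntegral.continuousOn_primitive_interval' hi left_mem_uIcc).mono h01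
  have hcΦ : ContinuousOn Φ (Icc ε δ) :=
    (intervalIntegral.continuousOn_primitive_interval' hiq left_mem_uIcc).mono h01
  have hcAr : ∀ s : ℝ, ContinuousOn (fun t => A t ^ s) (Icc ε δ) := fun s =>
    hcA.rpow_const fun t ht => Or.inl (hA0 t (hsubI ht)).ne'
  have huI : uIcc ε δ = Icc ε δ := uIcc_of_le hεδ
  have hgI : IntervalIntegrable g volume ε δ := hi.mono_set (huI ▸ h01)
  have hgqI : IntervalIntegrable (fun u => g u ^ q) volume ε δ := hiq.mono_set (huI ▸ h01)
  have hw : IntervalIntegrable (fun t => A t ^ (p - q) * g t ^ q) volume ε δ :=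
    hgqI.continuousOn_mul (huI ▸ hcAr _)
  refine ⟨hw, ?_⟩
  set D : ℝ → ℝ := fun t => ((g t - A t) / t * (p - q) * A t ^ (p - q - 1)) * Φ t
    + A t ^ (p - q) * g t ^ q
    - γ * (A t ^ p + t * ((g t - A t) / t * p * A t ^ (p - 1))) with hD
  set F : ℝ → ℝ := fun t => A t ^ (p - q) * Φ t - γ * (t * A t ^ p) with hF
  have hcF : ContinuousOn F (Icc ε δ) :=
    ((hcAr _).mul hcΦ).sub (continuousOn_const.mul (continuousOn_id.mul (hcAr _)))
  have hA' : IntervalIntegrable (fun t => t⁻¹ * (g t - A t)) volume ε δ := by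
    refine (hgI.sub ((huI ▸ hcA : ContinuousOn A (uIcc ε δ)).intervalIntegrable)).continuousOn_mul ?_
    rw [huI]
    exact continuousOn_id.inv₀ fun t ht => (hsubI ht).1.ne'
  have hDi : IntervalIntegrable D volume ε δ := by
    have h1 : IntervalIntegrable
        (fun t => ((p - q) * A t ^ (p - q - 1) * Φ t) * (t⁻¹ * (g t - A t))) volume ε δ :=
      hA'.continuousOn_mul (by
        rw [huI]; exact (continuousOn_const.mul (hcAr _)).mul hcΦ)
    have h2 : IntervalIntegrable
        (fun t => (t * p * A t ^ (p - 1)) * (t⁻¹ * (g t - A t))) volume ε δ :=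
      hA'.continuousOn_mul (by
        rw [huI]; exact (continuousOn_id.mul continuousOn_const).mul (hcAr _))
    have h3 : IntervalIntegrable (fun t => A t ^ p) volume ε δ :=
      (huI ▸ hcAr p : ContinuousOn (fun t => A t ^ p) (uIcc ε δ)).intervalIntegrable
    have h := (h1.add hw).sub ((h3.add h2).const_mul γ)
    refine h.congr fun t _ => ?_
    simp only [hD]
    ring
  have hcount := hmono.countable_not_continuousWithinAt
  have hFTC : ∫ t in ε..δ, D t = F δ - F ε := by
    refine integral_eq_of_hasDerivAt_off_countable_of_le F D hεδ hcount hcF ?_ hDi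
    rintro t ⟨ht, htc⟩
    have ht1 : t ∈ Ioo (0 : ℝ) 1 := ⟨hε.trans ht.1, ht.2.trans_le hδ⟩
    have ht2 : t ∈ Ioc (0 : ℝ) 1 := ⟨ht1.1, ht1.2.le⟩
    have hca : ContinuousAt g t := by
      have : ContinuousWithinAt g (Ioc 0 1) t := by
        by_contra hcon
        exact htc ⟨ht2, hcon⟩
      exact this.continuousAt (Ioc_mem_nhds ht1.1 ht1.2)
    have hcaq : ContinuousAt (fun u => g u ^ q) t := hca.rpow_const (Or.inr (by linarith))
    have hG : HasDerivAt (fun s => ∫ u in 0..s, g u) (g t) t :=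
      intervalIntegral.integral_hasDerivAt_right (hgt t ht2)
        ⟨Ioc 0 1, Ioc_mem_nhds ht1.1 ht1.2, hi.1.aestronglyMeasurable⟩ hca
    have hdΦ : HasDerivAt Φ (g t ^ q) t :=
      intervalIntegral.integral_hasDerivAt_right (hgqt t ht2)
        ⟨Ioc 0 1, Ioc_mem_nhds ht1.1 ht1.2, hiq.1.aestronglyMeasurable⟩ hcaq
    have hdA : HasDerivAt A ((g t - A t) / t) t := by
      have h := hG.div (hasDerivAt_id t) ht1.1.ne'
      refine h.congr_deriv ?_
      have := ht1.1.ne'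
      simp only [hA, id]
      field_simp
    have hdr : ∀ s : ℝ, HasDerivAt (fun t => A t ^ s) ((g t - A t) / t * s * A t ^ (s - 1)) t :=
      fun s => hdA.rpow_const (Or.inl (hA0 t ht2).ne')
    have h := ((hdr (p - q)).mul hdΦ).sub (((hasDerivAt_id t).mul (hdr p)).const_mul γ)
    refine h.congr_deriv ?_
    simp only [hD, id, one_mul]
  have hle : ∫ t in ε..δ, k * (A t ^ (p - q) * g t ^ q) ≤ ∫ t in ε..δ, D t := by
    refine intervalIntegral.integral_mono_on hεδ (hw.const_mul k) hDi fun t ht => ?_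
    have ht' := hsubI ht
    exact pointwise_bound hq hpq ht'.1 (hA0 t ht') (hg0 t) (hgA t ht') (hRH t ht') (by linarith)
  rw [intervalIntegral.integral_const_mul, hFTC] at hle
  have hadd : ∀ t ∈ Ioc (0 : ℝ) 1, A t ^ (p - q) * A t ^ q = A t ^ p := fun t ht => by
    rw [← Real.rpow_add (hA0 t ht)]; ring_nf
  -- `γ ≤ 1` by Bernoulli's inequality, so Jensen's inequality makes the lower boundary term
  -- nonnegative
  have hγ1 : γ ≤ 1 := by
    have hb := one_add_mul_self_le_rpow_one_add (s := 1 / (p - 1))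
      (by have : 0 < 1 / (p - 1) := by positivity
          linarith) hq.le
    have e : 1 + 1 / (p - 1) = p / (p - 1) := by field_simp; ring
    rw [e, mul_one_div] at hb
    have := mul_le_mul_of_nonneg_left hb hβ0
    linarith
  have hFε : 0 ≤ F ε := by
    have hm : ε ∈ Ioc (0 : ℝ) 1 := ⟨hε, hεδ.trans hδ⟩
    have h1 := mul_le_mul_of_nonneg_left (hJ ε hm) (Real.rpow_nonneg (hA0 ε hm).le (p - q))
    have h2 : 0 ≤ ε * A ε ^ p := mul_nonneg hε.le (Real.rpow_nonneg (hA0 ε hm).le _)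
    rw [mul_left_comm, hadd ε hm] at h1
    simp only [hF]
    nlinarith
  have hFδ : F δ ≤ c * q / p * (δ * A δ ^ p) := by
    have hm : δ ∈ Ioc (0 : ℝ) 1 := ⟨hε.trans_le hεδ, hδ⟩
    have h1 : A δ ^ (p - q) * Φ δ ≤ A δ ^ (p - q) * (c * δ * A δ ^ q) :=
      mul_le_mul_of_nonneg_left (hRH δ hm) (Real.rpow_nonneg (hA0 δ hm).le (p - q))
    have h2 : 0 ≤ δ * A δ ^ p := mul_nonneg hm.1.le (Real.rpow_nonneg (hA0 δ hm).le _)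
    rw [mul_left_comm, hadd δ hm] at h1
    have h3 : c - γ ≤ c * q / p := by
      have : 0 ≤ c * ((p - q) / p) * (q / (p - 1)) := mul_nonneg hβ0 (by positivity)
      have e : c - c * ((p - q) / p) = c * q / p := by field_simp; ring
      rw [hγ, ← e]
      linarith
    have := mul_le_mul_of_nonneg_right h3 h2
    simp only [hF]
    linarith
  linarith

/-- Inequality (3.6), the quantitative core of Theorem 3. -/
theorem reverse_holder_quantitative (q c : ℝ) (hq : 1 < q) (hc : 1 ≤ c)
    (g : ℝ → ℝ≥0) (hmono : AntitoneOn g (Set.Ioc (0 : ℝ) 1))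
    (hint : (∫⁻ u in Set.Ioc (0 : ℝ) 1, ((g u : ℝ≥0∞)) ^ q) ≠ ⊤)
    (hRH : ∀ t ∈ Set.Ioc (0 : ℝ) 1,
        hardyAvg (fun u => g u ^ q) t ≤ ENNReal.ofReal c * hardyAvg g t ^ q)
    (p : ℝ) (hpq : q ≤ p)
    (hkp : 0 < 1 - c * ((p - q) / p) * (p / (p - 1)) ^ q) :
    ∀ δ ∈ Set.Ioc (0 : ℝ) 1,
      (ENNReal.ofReal δ)⁻¹
          * ∫⁻ t in Set.Ioc (0 : ℝ) δ, hardyAvg g t ^ (p - q) * (g t : ℝ≥0∞) ^ q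
      ≤ ENNReal.ofReal
            (q * c / (p * (1 - c * ((p - q) / p) * (p / (p - 1)) ^ q)))
          * hardyAvg g δ ^ p := by
  set gr : ℝ → ℝ := fun u => (g u : ℝ) with hgr
  have hg0 : ∀ u, 0 ≤ gr u := fun u => (g u).coe_nonneg
  have hgm : AEMeasurable g (volume.restrict (Ioc 0 1)) :=
    aemeasurable_restrict_of_antitoneOn measurableSet_Ioc hmono
  have hiq' : IntegrableOn (fun u => gr u ^ q) (Ioc 0 1) := by
    have h := integrable_toReal_of_lintegral_ne_top
      (hgm.coe_nnreal_ennreal.pow_const q) hint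
    refine h.congr (Filter.Eventually.of_forall fun u => ?_)
    simp [hgr, ← ENNReal.toReal_rpow]
  have hi' : IntegrableOn gr (Ioc 0 1) := by
    refine Integrable.mono' (g := fun u => 1 + gr u ^ q) ((integrable_const _).add hiq')
      hgm.coe_nnreal_real.aestronglyMeasurable (Filter.Eventually.of_forall fun u => ?_)
    rw [Real.norm_of_nonneg (hg0 u)]
    rcases le_total (gr u) 1 with h | h
    · linarith [Real.rpow_nonneg (hg0 u) q]
    · linarith [Real.self_le_rpow_of_one_le h hq.le]
  have hi : IntervalIntegrable gr volume 0 1 :=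
    (intervalIntegrable_iff_integrableOn_Ioc_of_le zero_le_one).2 hi'
  have hiq : IntervalIntegrable (fun u => gr u ^ q) volume 0 1 :=
    (intervalIntegrable_iff_integrableOn_Ioc_of_le zero_le_one).2 hiq'
  have hp0 : 0 < p := by linarith
  by_cases hz : ∀ u ∈ Ioc (0 : ℝ) 1, g u = 0
  · intro δ hδ
    have h0 : ∫⁻ t in Ioc (0 : ℝ) δ, hardyAvg g t ^ (p - q) * (g t : ℝ≥0∞) ^ q = 0 := by
      rw [setLIntegral_congr_fun (g := fun _ => 0) measurableSet_Ioc]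
      · simp
      · intro t ht
        simp [hz t ⟨ht.1, ht.2.trans hδ.2⟩, ENNReal.zero_rpow_of_pos (zero_lt_one.trans hq)]
    rw [h0, mul_zero]
    exact zero_le
  push Not at hz
  obtain ⟨v, hv, hgv⟩ := hz
  have hpos : ∀ t ∈ Ioc (0 : ℝ) 1, 0 < ∫ u in 0..t, gr u := by
    intro t ht
    have hm : 0 < min t v := lt_min ht.1 hv.1
    have hit : IntervalIntegrable gr volume 0 t := hi.mono_set (by
      rw [uIcc_of_le ht.1.le, uIcc_of_le zero_le_one]; exact Icc_subset_Icc le_rfl ht.2)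
    have h1 : 0 < ∫ u in 0..min t v, gr u := by
      refine intervalIntegral.intervalIntegral_pos_of_pos_on ?_ (fun u hu => ?_) hm
      · refine hit.mono_set ?_
        rw [uIcc_of_le ht.1.le, uIcc_of_le hm.le]
        exact Icc_subset_Icc le_rfl (min_le_left _ _)
      · have huv : u ≤ v := hu.2.le.trans (min_le_right _ _)
        exact NNReal.coe_pos.2
          ((pos_iff_ne_zero.2 hgv).trans_le (hmono ⟨hu.1, huv.trans hv.2⟩ hv huv))
    exact h1.trans_le (intervalIntegral.integral_mono_interval le_rfl hm.le (min_le_left _ _)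
      (Filter.Eventually.of_forall hg0) hit)
  have havg : ∀ f : ℝ → ℝ≥0, IntegrableOn (fun u => (f u : ℝ)) (Ioc 0 1) →
      ∀ t ∈ Ioc (0 : ℝ) 1, hardyAvg f t = ENNReal.ofReal ((∫ u in 0..t, (f u : ℝ)) / t) := by
    intro f hf t ht
    rw [ENNReal.ofReal_div_of_pos ht.1, intervalIntegral.integral_of_le ht.1.le,
      ofReal_integral_eq_lintegral_ofReal (hf.mono_set (Ioc_subset_Ioc_right ht.2))
        (Filter.Eventually.of_forall fun u => (f u).coe_nonneg), hardyAvg, mul_comm,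
      ← div_eq_mul_inv]
    simp only [ENNReal.ofReal_coe_nnreal]
  have hA0 : ∀ t ∈ Ioc (0 : ℝ) 1, 0 < (∫ u in 0..t, gr u) / t := fun t ht =>
    div_pos (hpos t ht) ht.1
  have hRH' : ∀ t ∈ Ioc (0 : ℝ) 1,
      ∫ u in 0..t, gr u ^ q ≤ c * t * ((∫ u in 0..t, gr u) / t) ^ q := by
    intro t ht
    have h := hRH t ht
    rw [havg g hi' t ht, havg (fun u => g u ^ q) (by simpa only [NNReal.coe_rpow] using hiq') t ht,
      ENNReal.ofReal_rpow_of_pos (hA0 t ht), ← ENNReal.ofReal_mul (by linarith),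
      ENNReal.ofReal_le_ofReal_iff (mul_nonneg (by linarith) (Real.rpow_nonneg (hA0 t ht).le _)),
      div_le_iff₀ ht.1] at h
    simp only [NNReal.coe_rpow] at h
    calc _ ≤ _ := h
      _ = _ := by ring
  intro δ hδ
  set k := 1 - c * ((p - q) / p) * (p / (p - 1)) ^ q with hk
  set Aδ := (∫ u in 0..δ, gr u) / δ with hAδ
  have hbound : ∀ n : ℕ, ∫⁻ t in Ioc (δ / (n + 1)) δ, hardyAvg g t ^ (p - q) * (g t : ℝ≥0∞) ^ q ≤
      ENNReal.ofReal (q * c / (p * k) * Aδ ^ p * δ) := by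
    intro n
    have hn : (1 : ℝ) ≤ n + 1 := by linarith [n.cast_nonneg (α := ℝ)]
    have hε : 0 < δ / (n + 1) := div_pos hδ.1 (by linarith)
    have hεδ : δ / (n + 1) ≤ δ := div_le_self hδ.1.le hn
    obtain ⟨hI, hle⟩ := truncated_bound hq hc hpq hkp hg0 (fun x hx y hy hxy =>
      NNReal.coe_le_coe.2 (hmono hx hy hxy)) hi hiq hpos hRH' hε hεδ hδ.2
    rw [setLIntegral_congr_fun (g := fun t => ENNReal.ofReal
      (((∫ u in 0..t, gr u) / t) ^ (p - q) * gr t ^ q)) measurableSet_Ioc]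
    · rw [← ofReal_integral_eq_lintegral_ofReal hI.1, ← intervalIntegral.integral_of_le hεδ]
      · refine ENNReal.ofReal_le_ofReal ?_
        rw [mul_comm, ← le_div_iff₀ hkp] at hle
        refine hle.trans (le_of_eq ?_)
        rw [← hAδ]
        have := hkp.ne'
        field_simp
      · filter_upwards [ae_restrict_mem measurableSet_Ioc] with t ht
        exact mul_nonneg (Real.rpow_nonneg
          (hA0 t ⟨hε.trans ht.1, ht.2.trans hδ.2⟩).le _) (Real.rpow_nonneg (hg0 t) _)
    · intro t ht
      have ht' : t ∈ Ioc (0 : ℝ) 1 := ⟨hε.trans ht.1, ht.2.trans hδ.2⟩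
      simp only
      rw [ENNReal.ofReal_mul (Real.rpow_nonneg (hA0 t ht').le _), havg g hi' t ht',
        ENNReal.ofReal_rpow_of_pos (hA0 t ht'),
        ← ENNReal.ofReal_rpow_of_nonneg (hg0 t) (by linarith), ENNReal.ofReal_coe_nnreal]
  have hU : Ioc 0 δ = ⋃ n : ℕ, Ioc (δ / (n + 1)) δ := by
    ext t
    simp only [mem_iUnion, mem_Ioc]
    constructor
    · rintro ⟨h1, h2⟩
      obtain ⟨n, hn⟩ := exists_nat_gt (δ / t)
      refine ⟨n, ?_, h2⟩
      rw [div_lt_iff₀ h1] at hn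
      rw [div_lt_iff₀ (by positivity)]
      nlinarith
    · rintro ⟨n, h1, h2⟩
      exact ⟨(div_pos hδ.1 (by positivity)).trans h1, h2⟩
  have hdir : Directed (· ⊆ ·) (fun n : ℕ => Ioc (δ / ((n : ℝ) + 1)) δ) := by
    refine Monotone.directed_le (fun m n hmn => Ioc_subset_Ioc_left ?_)
    have : (m : ℝ) ≤ n := Nat.cast_le.2 hmn
    exact div_le_div_of_nonneg_left hδ.1.le (by positivity) (by linarith)
  have htot : ∫⁻ t in Ioc (0 : ℝ) δ, hardyAvg g t ^ (p - q) * (g t : ℝ≥0∞) ^ q ≤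
      ENNReal.ofReal (q * c / (p * k) * Aδ ^ p * δ) := by
    rw [hU, setLIntegral_iUnion_of_directed _ hdir]
    exact iSup_le hbound
  have hδ0 : ENNReal.ofReal δ ≠ 0 := by simpa using hδ.1
  have hC : 0 ≤ q * c / (p * k) :=
    div_nonneg (mul_nonneg (by linarith) (by linarith)) (mul_pos hp0 hkp).le
  refine (mul_le_mul_right htot _).trans (le_of_eq ?_)
  rw [ENNReal.ofReal_mul (mul_nonneg hC (Real.rpow_nonneg (hA0 δ hδ).le _)), mul_comm, mul_assoc,
    ENNReal.mul_inv_cancel hδ0 ENNReal.ofReal_ne_top, mul_one, ENNReal.ofReal_mul hC,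
    havg g hi' δ hδ, ENNReal.ofReal_rpow_of_pos (hA0 δ hδ)]
end
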